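/- arXiv:math/0504581 — 4 statements merged into one kernel-verified Lean document; each statement's English description precedes it below -/
import Mathlib

section
/- Let K = F_3(x)(y) where y satisfies y^2 = (x + 2)(x^2 + 1) (the polynomial Y^2 − (x+2)(x^2+1) is irreducible over F_3(x)). Then the ideal class group Cl(O_K), where O_K is the integral closure of F_3[x] in K, is cyclic of order 2. -/
/-!
Write `R = 𝔽₃[x]` and `D = (x + 2)(x² + 1)`, a squarefree cubic.

The ring of integers is `R ⊕ R y`: if `p + q y` is integral, so is its conjugate `p - q y`, hence
`2p` and `q² D` lie in `R`, and squarefreeness of `D` gives `q ∈ R`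
(`exists_of_sq_mul_cubicD`).

A nonzero ideal of `R ⊕ R y` has the form `d · (a, b + y)` with `a ∣ b² - D`
(`exists_standard_form`). Writing `b² - D = a c`, the identity
`(b - y) · (a, b + y) = (a) · (c, -b + y)` (`span_flip`) allows `a` to be replaced by `c` within the
ideal class, after reducing `b` modulo `a`. As `deg D = 3`, this lowers the degree of `a` as long as
it is at least `2` (`reduce`). If `a` is constant the ideal is trivial; if `a` is linear with root
`t ∈ 𝔽₃`, then `b` is a constant with `b² = D(t)`. The only affine `𝔽₃`-point of `y² = D(x)` is
`(1, 0)`, so there is only one further candidate, `P = (x - 1, y)`.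

Finally `P` is not principal (`not_principal`): a norm `p² - q² D` never has degree `1`, because
`deg D = 3`, whereas a generator would have norm dividing `(x - 1)²` and `D`, and so would be
a unit.
-/

open Polynomial

/-- The cubic `D = (x + 2)(x² + 1)` over `𝔽₃`. -/
noncomputable def cubicD : (ZMod 3)[X] := (X + 2) * (X ^ 2 + 1)

lemma three_eq_zero : (3 : (ZMod 3)[X]) = 0 := by
  have : (C (3 : ZMod 3)) = (3 : (ZMod 3)[X]) := rfl
  rw [← this, show (3 : ZMod 3) = 0 from rfl, C_0]

lemma natDegree_cubicD : cubicD.natDegree = 3 := by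
  unfold cubicD; compute_degree!

lemma cubicD_ne_zero : cubicD ≠ 0 := by
  intro h; have := natDegree_cubicD; simp [h] at this

lemma squarefree_cubicD : Squarefree cubicD := by
  apply Polynomial.Separable.squarefree
  refine ⟨2, -2 * (X ^ 2 + X), ?_⟩
  have h2 : derivative (2 : (ZMod 3)[X]) = 0 := derivative_ofNat 2
  simp only [cubicD, derivative_mul, derivative_add, derivative_X, derivative_pow, derivative_one,
    h2]
  simp only [Nat.cast_ofNat, C_ofNat, add_zero, one_mul, mul_one, Nat.add_one_sub_one,
    pow_one]
  linear_combination (1 - 2 * X ^ 2 - 4 * X ^ 3 - 2 * X ^ 4) * three_eq_zero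

/-- No cancellation of leading terms occurs in the norm `p² - q² D`, since the two terms have
degrees of different parity. -/
lemma natDegree_norm_of_ne (p q : (ZMod 3)[X]) (hq : q ≠ 0) :
    (p ^ 2 - q ^ 2 * cubicD).natDegree = max (2 * p.natDegree) (2 * q.natDegree + 3) := by
  have h : (q ^ 2 * cubicD).natDegree = 2 * q.natDegree + 3 := by
    rw [natDegree_mul (pow_ne_zero _ hq) cubicD_ne_zero, natDegree_pow, natDegree_cubicD]
  have h' : (p ^ 2).natDegree = 2 * p.natDegree := by rw [natDegree_pow]
  rcases lt_or_gt_of_ne (show 2 * p.natDegree ≠ 2 * q.natDegree + 3 by omega) with hl | hl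
  · rw [natDegree_sub_eq_right_of_natDegree_lt (by omega), h]; omega
  · rw [natDegree_sub_eq_left_of_natDegree_lt (by omega), h']; omega

lemma natDegree_norm_ne_one (p q : (ZMod 3)[X]) : (p ^ 2 - q ^ 2 * cubicD).natDegree ≠ 1 := by
  by_cases hq : q = 0
  · simp only [hq, natDegree_pow, ne_eq, OfNat.ofNat_ne_zero, not_false_eq_true, zero_pow, zero_mul,
      sub_zero]
    omega
  · rw [natDegree_norm_of_ne p q hq]; omega

section
variable {O : Type*} [CommRing O] [Algebra (ZMod 3)[X] O]

local notation "φ" => algebraMap (ZMod 3)[X] O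

omit [Algebra (ZMod 3)[X] O] in
lemma span_singleton_mul_span_pair (x a b : O) :
    Ideal.span {x} * Ideal.span {a, b} = Ideal.span {x * a, x * b} := by
  rw [Ideal.span_mul_span', Set.singleton_mul, Set.image_pair]

/-- Two ideals are related if they agree up to nonzero principal factors, i.e. (for nonzero ideals
of a Dedekind domain) if they have the same ideal class. -/
def IdealRel (I J : Ideal O) : Prop :=
  ∃ x z : O, x ≠ 0 ∧ z ≠ 0 ∧ Ideal.span {x} * I = Ideal.span {z} * J

omit [Algebra (ZMod 3)[X] O] in
lemma IdealRel.trans [IsDomain O] {I J K : Ideal O} (h : IdealRel I J) (h' : IdealRel J K) :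
    IdealRel I K := by
  obtain ⟨x, z, hx, hz, h⟩ := h
  obtain ⟨x', z', hx', hz', h'⟩ := h'
  refine ⟨x' * x, z * z', mul_ne_zero hx' hx, mul_ne_zero hz hz', ?_⟩
  rw [← Ideal.span_singleton_mul_span_singleton, ← Ideal.span_singleton_mul_span_singleton,
    mul_assoc, h, mul_left_comm, h', mul_assoc]

lemma span_pair_mod (y : O) (a b c : (ZMod 3)[X]) :
    Ideal.span {φ a, φ (b + a * c) + y} = Ideal.span {φ a, φ b + y} := by
  apply le_antisymm <;> rw [Ideal.span_le] <;> rintro _ (rfl | rfl) <;>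
    simp only [SetLike.mem_coe, Ideal.mem_span_pair]
  · exact ⟨1, 0, by ring⟩
  · exact ⟨φ c, 1, by simp only [map_add, map_mul]; ring⟩
  · exact ⟨1, 0, by ring⟩
  · exact ⟨- φ c, 1, by simp only [map_add, map_mul]; ring⟩

/-- The reduction step: with `b² - D = a c`, the ideals `(a, b + y)` and `(c, -b + y)` are in the
same class. -/
lemma span_flip (y : O) (hy : y ^ 2 = φ cubicD) (a b c : (ZMod 3)[X])
    (h : b ^ 2 - cubicD = a * c) :
    Ideal.span {φ b - y} * Ideal.span {φ a, φ b + y} =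
      Ideal.span {φ a} * Ideal.span {φ c, φ (-b) + y} := by
  have h' := congrArg φ h
  simp only [map_sub, map_pow, map_mul] at h'
  rw [← hy] at h'
  rw [span_singleton_mul_span_pair, span_singleton_mul_span_pair]
  apply le_antisymm <;> rw [Ideal.span_le] <;> rintro _ (rfl | rfl) <;>
    simp only [SetLike.mem_coe, Ideal.mem_span_pair, map_neg]
  · exact ⟨0, -1, by ring⟩
  · exact ⟨1, 0, by linear_combination -h'⟩
  · exact ⟨0, 1, by linear_combination h'⟩
  · exact ⟨-1, 0, by ring⟩

/-- Here `d` generates the ideal of `y`-coefficients of elements of `I`, and `d a` generates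
`I ∩ 𝔽₃[x]`. -/
lemma exists_standard_form [IsDomain O] (y : O) (hy : y ^ 2 = φ cubicD)
    (hspan : ∀ z : O, ∃ p q, z = φ p + φ q * y)
    (hind : ∀ p q, φ p + φ q * y = 0 → p = 0 ∧ q = 0) (I : Ideal O) (hI : I ≠ ⊥) :
    ∃ d a b : (ZMod 3)[X], d ≠ 0 ∧ a ≠ 0 ∧ a ∣ b ^ 2 - cubicD ∧
      I = Ideal.span {φ d} * Ideal.span {φ a, φ b + y} := by
  let J : Ideal (ZMod 3)[X] :=
    { carrier := {q | ∃ p, φ p + φ q * y ∈ I}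
      zero_mem' := ⟨0, by simp⟩
      add_mem' := by
        rintro q q' ⟨p, hp⟩ ⟨p', hp'⟩
        refine ⟨p + p', ?_⟩
        convert I.add_mem hp hp' using 1
        simp only [map_add]; ring
      smul_mem' := by
        rintro r q ⟨p, hp⟩
        refine ⟨r * p, ?_⟩
        convert I.mul_mem_left (φ r) hp using 1
        simp only [map_mul, smul_eq_mul]; ring }
  obtain ⟨d, hd⟩ := (IsPrincipalIdealRing.principal J).principal
  obtain ⟨e, he⟩ := (IsPrincipalIdealRing.principal (I.comap φ)).principal
  have hJ : ∀ p q, φ p + φ q * y ∈ I → d ∣ q := fun p q h ↦ by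
    have : q ∈ J := ⟨p, h⟩
    rw [hd] at this
    exact Ideal.mem_span_singleton.1 this
  have hM : ∀ p, φ p ∈ I → e ∣ p := fun p h ↦ by
    have : p ∈ I.comap φ := h
    rw [he] at this
    exact Ideal.mem_span_singleton.1 this
  have heI : φ e ∈ I := by
    have : e ∈ I.comap φ := by rw [he]; exact Ideal.mem_span_singleton_self e
    exact this
  obtain ⟨c, hc⟩ : d ∈ J := by rw [hd]; exact Ideal.mem_span_singleton_self d
  obtain ⟨b, rfl⟩ : d ∣ c := hJ (d * cubicD) c (by
    convert I.mul_mem_left y hc using 1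
    rw [map_mul, ← hy]; ring)
  obtain ⟨a, rfl⟩ : d ∣ e := hJ 0 e (by
    convert I.mul_mem_left y heI using 1
    simp; ring)
  -- the norm of a nonzero element of `I` is a nonzero element of `I ∩ 𝔽₃[x]`
  have hda : d * a ≠ 0 := by
    intro h0
    obtain ⟨z, hz, hz0⟩ := Submodule.exists_mem_ne_zero_of_ne_bot hI
    obtain ⟨p, q, rfl⟩ := hspan z
    have hN : φ (p ^ 2 - q ^ 2 * cubicD) ∈ I := by
      convert I.mul_mem_left (φ p - φ q * y) hz using 1
      simp only [map_sub, map_mul, map_pow, ← hy]; ring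
    have h1 := hM _ hN
    rw [h0, zero_dvd_iff] at h1
    have h2 : (φ p + φ q * y) * (φ p + φ (-q) * y) = 0 := by
      have := congrArg φ h1
      simp only [map_sub, map_mul, map_pow, ← hy, map_zero] at this
      rw [map_neg]
      linear_combination this
    rcases mul_eq_zero.1 h2 with h | h
    · exact hz0 h
    · obtain ⟨hp, hq⟩ := hind _ _ h
      exact hz0 (by simp [hp, neg_eq_zero.1 hq])
  refine ⟨d, a, b, left_ne_zero_of_mul hda, right_ne_zero_of_mul hda, ?_, ?_⟩
  · have := hM (d * (b ^ 2 - cubicD)) (by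
      convert I.mul_mem_left (φ b - y) hc using 1
      simp only [map_sub, map_mul, map_pow, ← hy]; ring)
    exact (mul_dvd_mul_iff_left (left_ne_zero_of_mul hda)).1 this
  · rw [span_singleton_mul_span_pair]
    apply le_antisymm
    · intro z hz
      obtain ⟨p, q, rfl⟩ := hspan z
      obtain ⟨k, rfl⟩ := hJ _ _ hz
      obtain ⟨l, hl⟩ := hM (p - k * (d * b)) (by
        convert I.sub_mem hz (I.mul_mem_left (φ k) hc) using 1
        simp only [map_sub, map_mul]; ring)
      have hl' := congrArg φ hl
      simp only [map_sub, map_mul] at hl'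
      rw [Ideal.mem_span_pair]
      refine ⟨φ l, φ k, ?_⟩
      rw [map_mul]
      linear_combination -hl'
    · rw [Ideal.span_le]
      rintro _ (rfl | rfl)
      · simpa using heI
      · show _ ∈ I
        convert hc using 1
        rw [map_mul]; ring

/-- The only affine `𝔽₃`-point of the curve `b² = (t + 2)(t² + 1)` is `(1, 0)`. -/
lemma zmod_aux : ∀ t b : ZMod 3, b ^ 2 - (t + 2) * (t ^ 2 + 1) = 0 → b = 0 ∧ t = 1 := by decide

/-- Since `u⁻¹ = u` in `𝔽₃ˣ`, the root of `u X + v` is `-(u v)`. -/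
lemma zmod_aux' : ∀ u v : ZMod 3, u ≠ 0 → u * u = 1 ∧ u * -(u * v) + v = 0 := by decide

/-- Every ideal in standard form is equivalent to `⊤` or to `P = (x - 1, y)`; strong induction on
the degree of `a`. -/
lemma reduce [IsDomain O] (y : O) (hy : y ^ 2 = φ cubicD)
    (hind : ∀ p q, φ p + φ q * y = 0 → p = 0 ∧ q = 0) (n : ℕ) :
    ∀ a b : (ZMod 3)[X], a.natDegree = n → a ≠ 0 → a ∣ b ^ 2 - cubicD →
      IdealRel (Ideal.span {φ a, φ b + y}) ⊤ ∨
      IdealRel (Ideal.span {φ a, φ b + y}) (Ideal.span {φ (X - 1), y}) := by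
  have : Nontrivial O := inferInstance
  have hinj : ∀ a, a ≠ 0 → φ a ≠ 0 := fun a ha h ↦ ha (hind a 0 (by simp [h])).1
  induction n using Nat.strong_induction_on with
  | _ n ih =>
  intro a b han ha hab
  -- replacing `b` by its remainder modulo `a`
  wlog hb : b = b % a generalizing b
  · have key : b = b % a + a * (b / a) := (EuclideanDomain.mod_add_div b a).symm
    rw [key, span_pair_mod]
    refine this (b % a) ?_ ((mod_eq_self_iff ha).2 (degree_mod_lt b ha)).symm
    obtain ⟨k, hk⟩ := hab
    refine ⟨k - 2 * b * (b / a) + a * (b / a) ^ 2, ?_⟩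
    rw [show b % a = b - a * (b / a) by linear_combination -key]
    linear_combination hk
  have hba : n ≠ 0 → b.natDegree < n := fun h ↦ by
    rw [hb, ← han]; exact natDegree_mod_lt b (by omega)
  rcases Nat.lt_or_ge n 2 with hn | hn
  · interval_cases n
    · left
      refine ⟨1, 1, one_ne_zero, one_ne_zero, ?_⟩
      congr 1
      have hu : IsUnit a := by rw [isUnit_iff_degree_eq_zero, degree_eq_natDegree ha, han]; rfl
      exact Ideal.eq_top_of_isUnit_mem _ (Ideal.subset_span (by simp)) (hu.map φ)
    · right
      have hb0 : b.natDegree = 0 := by have := hba (by omega); omega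
      obtain ⟨u, v, rfl⟩ := exists_eq_X_add_C_of_natDegree_le_one han.le
      obtain ⟨β, rfl⟩ : ∃ β, b = C β := ⟨_, eq_C_of_natDegree_eq_zero hb0⟩
      have hu : u ≠ 0 := by rintro rfl; simp at han
      obtain ⟨k, hk⟩ := hab
      have hk' := congrArg (eval (-(u * v))) hk
      obtain ⟨huu, huv⟩ : u * u = 1 ∧ (u * -(u * v) + v = 0) :=
        zmod_aux' u v hu
      simp only [cubicD, eval_mul, eval_add, eval_sub, eval_pow, eval_C, eval_X, eval_one,
        eval_ofNat, huv, zero_mul] at hk'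
      obtain ⟨rfl, hv⟩ := zmod_aux _ _ hk'
      have hv' : v = -u := by linear_combination (-v) * huu - u * hv
      subst hv'
      have hUU : φ (C u) * φ (C u) = 1 := by rw [← map_mul, ← C_mul, huu, C_1, map_one]
      refine ⟨1, 1, one_ne_zero, one_ne_zero, ?_⟩
      congr 1
      apply le_antisymm <;> rw [Ideal.span_le] <;> rintro _ (rfl | rfl) <;>
        simp only [SetLike.mem_coe, Ideal.mem_span_pair]
      · exact ⟨φ (C u), 0, by simp only [map_add, map_mul, map_sub, map_neg, map_one]; ring⟩
      · exact ⟨0, 1, by simp⟩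
      · refine ⟨φ (C u), 0, ?_⟩
        simp only [map_add, map_mul, map_sub, map_neg, map_one]
        linear_combination (φ X - 1) * hUU
      · exact ⟨0, 1, by simp⟩
  · obtain ⟨c, hc⟩ := hab
    have hc0 : b ^ 2 - cubicD ≠ 0 := by
      intro h0
      have := natDegree_pow b 2
      rw [sub_eq_zero.1 h0, natDegree_cubicD] at this
      omega
    have hcne : c ≠ 0 := by rintro rfl; simp [hc] at hc0
    -- `deg c = deg (b² - D) - n ≤ max (2n - 2) 3 - n < n`, as `2 ≤ n`
    have hcdeg : c.natDegree < n := by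
      have h1 : (b ^ 2 - cubicD).natDegree ≤ max (2 * b.natDegree) 3 := by
        refine (natDegree_sub_le _ _).trans ?_
        rw [natDegree_pow, natDegree_cubicD]
      rw [hc, natDegree_mul ha hcne, han] at h1
      have := hba (by omega)
      omega
    have hrel : IdealRel (Ideal.span {φ a, φ b + y}) (Ideal.span {φ c, φ (-b) + y}) := by
      refine ⟨φ b - y, φ a, ?_, hinj a ha, span_flip y hy a b c hc⟩
      intro h
      have := (hind b (-1) (by simpa [sub_eq_add_neg] using h)).2
      simp at this
    have := ih _ hcdeg c (-b) rfl hcne ⟨a, by rw [neg_sq, hc, mul_comm]⟩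
    exact this.imp hrel.trans hrel.trans

lemma not_principal [IsDomain O] (y : O) (hy : y ^ 2 = φ cubicD)
    (hspan : ∀ z : O, ∃ p q, z = φ p + φ q * y)
    (hind : ∀ p q, φ p + φ q * y = 0 → p = 0 ∧ q = 0) :
    ¬ (Ideal.span {φ (X - 1), y}).IsPrincipal := by
  have norm_mul : ∀ p q a b c d : (ZMod 3)[X],
      φ p + φ q * y = (φ a + φ b * y) * (φ c + φ d * y) →
      p ^ 2 - q ^ 2 * cubicD = (a ^ 2 - b ^ 2 * cubicD) * (c ^ 2 - d ^ 2 * cubicD) := by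
    intro p q a b c d h
    obtain ⟨h1, h2⟩ := hind (p - (a * c + b * d * cubicD)) (q - (a * d + b * c)) (by
      simp only [map_sub, map_add, map_mul, ← hy]; linear_combination h)
    rw [sub_eq_zero.1 h1, sub_eq_zero.1 h2]; ring
  rintro ⟨g, hg⟩
  have hX : φ (X - 1) ∈ Ideal.span {g} := by
    rw [Ideal.span, ← hg]; exact Ideal.subset_span (by simp)
  have hY : y ∈ Ideal.span {g} := by
    rw [Ideal.span, ← hg]; exact Ideal.subset_span (by simp)
  have hG : g ∈ Ideal.span {φ (X - 1), y} := by
    rw [hg]; exact Submodule.mem_span_singleton_self g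
  rw [Ideal.mem_span_singleton] at hX hY
  obtain ⟨h, hX⟩ := hX
  obtain ⟨k, hY⟩ := hY
  obtain ⟨a, b, rfl⟩ := hspan g
  obtain ⟨c, d, rfl⟩ := hspan h
  obtain ⟨c', d', rfl⟩ := hspan k
  have n1 := norm_mul (X - 1) 0 a b c d (by simpa using hX)
  have n2 := norm_mul 0 1 a b c' d' (by simpa using hY)
  have hXd : ((X : (ZMod 3)[X]) - 1).natDegree = 1 := by
    rw [← C_1]; exact natDegree_X_sub_C 1
  have hX0 : (X : (ZMod 3)[X]) - 1 ≠ 0 := by rintro h; simp [h] at hXd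
  have m1 := congrArg natDegree n1
  have m2 := congrArg natDegree n2
  have e1 : (a ^ 2 - b ^ 2 * cubicD) * (c ^ 2 - d ^ 2 * cubicD) ≠ 0 := by
    rw [← n1]; simpa using hX0
  have e2 : (a ^ 2 - b ^ 2 * cubicD) * (c' ^ 2 - d' ^ 2 * cubicD) ≠ 0 := by
    rw [← n2]; simpa using cubicD_ne_zero
  rw [natDegree_mul (left_ne_zero_of_mul e1) (right_ne_zero_of_mul e1)] at m1
  rw [natDegree_mul (left_ne_zero_of_mul e2) (right_ne_zero_of_mul e2)] at m2
  simp [hXd, natDegree_cubicD] at m1 m2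
  have d1 := natDegree_norm_ne_one a b
  have d3 := natDegree_norm_ne_one c' d'
  have d2 := natDegree_norm_ne_one c d
  -- `N(g)` has degree at most `2` by `m1`; if it were `2`, then `N(k)` would have degree `1` by `m2`
  have d0 : (a ^ 2 - b ^ 2 * cubicD).natDegree = 0 := by omega
  have hb : b = 0 := by
    by_contra hb
    rw [natDegree_norm_of_ne a b hb] at d0
    omega
  subst hb
  -- so `g = a` is a nonzero constant in `(x - 1, y)`, contradicted by evaluation at the point `(1, 0)`
  rw [Ideal.mem_span_pair] at hG
  obtain ⟨s, t, hst⟩ := hG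
  obtain ⟨s, s', rfl⟩ := hspan s
  obtain ⟨t, t', rfl⟩ := hspan t
  obtain ⟨h1, -⟩ := hind (s * (X - 1) + t' * cubicD - a) (s' * (X - 1) + t) (by
    simp only [map_sub, map_add, map_mul, ← hy, map_zero] at hst ⊢
    linear_combination hst)
  have h2 := congrArg (eval 1) h1
  have hD1 : eval 1 cubicD = 0 := by simp [cubicD]; decide
  simp [hD1] at h2
  have ha : a.natDegree = 0 := by simpa using d0
  rw [eq_C_of_natDegree_eq_zero ha] at h2 e1
  simp at h2
  simp [h2] at e1

/-- The class number of any Dedekind domain of the form `𝔽₃[x] ⊕ 𝔽₃[x] y` with `y² = D`. -/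
theorem classGroup_card [IsDedekindDomain O] (y : O) (hy : y ^ 2 = φ cubicD)
    (hspan : ∀ z : O, ∃ p q, z = φ p + φ q * y)
    (hind : ∀ p q, φ p + φ q * y = 0 → p = 0 ∧ q = 0) : Nat.card (ClassGroup O) = 2 := by
  have hnp := not_principal y hy hspan hind
  have hP0 : Ideal.span {φ (X - 1), y} ∈ nonZeroDivisors (Ideal O) := by
    rw [mem_nonZeroDivisors_iff_ne_zero]
    intro h
    rw [h] at hnp
    exact hnp ⟨0, by simp⟩
  rw [Nat.card_eq_two_iff' 1]
  refine ⟨ClassGroup.mk0 ⟨_, hP0⟩, ?_, ?_⟩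
  · simp only [ne_eq]
    rwa [ClassGroup.mk0_eq_one_iff]
  · intro g hg
    obtain ⟨⟨I, hI⟩, rfl⟩ := ClassGroup.mk0_surjective g
    obtain ⟨d, a, b, hd, ha, hab, hIe⟩ := exists_standard_form y hy hspan hind I
      (by simpa using nonZeroDivisors.ne_zero hI)
    have hrel : IdealRel I (Ideal.span {φ a, φ b + y}) :=
      ⟨1, φ d, one_ne_zero, fun h ↦ hd (hind d 0 (by simp [h])).1, by simp [hIe]⟩
    rcases reduce y hy hind _ a b rfl ha hab with h | h
    · obtain ⟨x, z, hx, hz, h⟩ := hrel.trans h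
      have : ClassGroup.mk0 ⟨I, hI⟩ = ClassGroup.mk0 1 :=
        ClassGroup.mk0_eq_mk0_iff.2 ⟨x, z, hx, hz, by simpa using h⟩
      exact absurd (this.trans (map_one _)) hg
    · obtain ⟨x, z, hx, hz, h⟩ := hrel.trans h
      exact ClassGroup.mk0_eq_mk0_iff.2 ⟨x, z, hx, hz, h⟩

end

/-- Since `D` is squarefree, `q² D ∈ 𝔽₃[x]` forces `q ∈ 𝔽₃[x]`. -/
lemma exists_of_sq_mul_cubicD (q : RatFunc (ZMod 3)) (r : (ZMod 3)[X])
    (h : q ^ 2 * algebraMap _ _ cubicD = algebraMap _ _ r) :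
    ∃ s : (ZMod 3)[X], algebraMap _ _ s = q := by
  have hd := RatFunc.denom_ne_zero q
  have hd' : algebraMap (ZMod 3)[X] (RatFunc (ZMod 3)) q.denom ≠ 0 := by
    simpa using hd
  rw [← RatFunc.num_div_denom q] at h
  field_simp at h
  have h' : q.num ^ 2 * cubicD = q.denom ^ 2 * r := by
    apply RatFunc.algebraMap_injective (ZMod 3)
    simpa using h
  have hdvd : q.denom ^ 2 ∣ cubicD :=
    (q.isCoprime_num_denom.symm.pow : IsCoprime (q.denom ^ 2) (q.num ^ 2)).dvd_of_dvd_mul_left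
      ⟨r, h'⟩
  have hu : IsUnit q.denom := squarefree_cubicD _ (by rwa [← sq])
  have h1 : q.denom = 1 := (RatFunc.monic_denom q).eq_one_of_isUnit hu
  refine ⟨q.num, ?_⟩
  conv_rhs => rw [← RatFunc.num_div_denom q, h1]
  simp

theorem class_group_statement_8
    (f : Polynomial (RatFunc (ZMod 3)))
    (hf : f = X ^ 2 - C ((RatFunc.X + 2) * (RatFunc.X ^ 2 + 1)))
    [Fact (Irreducible f)] :
    IsCyclic (ClassGroup (FunctionField.ringOfIntegers (ZMod 3) (AdjoinRoot f))) ∧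
      Nat.card (ClassGroup (FunctionField.ringOfIntegers (ZMod 3) (AdjoinRoot f))) = 2 := by
  have hD : (RatFunc.X + 2) * (RatFunc.X ^ 2 + 1) =
      algebraMap (ZMod 3)[X] (RatFunc (ZMod 3)) cubicD := by
    simp [cubicD, map_ofNat]
  rw [hD] at hf
  have hmon : f.Monic := by rw [hf]; exact monic_X_pow_sub_C _ (by norm_num)
  have hdeg : f.natDegree = 2 := by rw [hf]; exact natDegree_X_pow_sub_C
  let ψ := algebraMap (RatFunc (ZMod 3)) (AdjoinRoot f)
  have hψ : ∀ r, algebraMap (ZMod 3)[X] (AdjoinRoot f) r = ψ (algebraMap _ _ r) :=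
    fun r ↦ IsScalarTower.algebraMap_apply _ _ _ r
  let y := AdjoinRoot.root f
  have heval : ∀ (i : RatFunc (ZMod 3) →+* AdjoinRoot f) (x : AdjoinRoot f),
      eval₂ i x f = x ^ 2 - i (algebraMap _ _ cubicD) := fun i x ↦
    (congrArg (eval₂ i x) hf).trans (by simp only [eval₂_sub, eval₂_X_pow, eval₂_C])
  have hy : y ^ 2 = ψ (algebraMap _ _ cubicD) := by
    have h := AdjoinRoot.eval₂_root f
    rw [heval] at h
    exact sub_eq_zero.1 h
  have hind : ∀ p q, ψ p + ψ q * y = 0 → p = 0 ∧ q = 0 := by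
    intro p q h
    have h1 : AdjoinRoot.mk f (C p + C q * X) = 0 := by
      rw [map_add, map_mul]
      exact h
    rw [AdjoinRoot.mk_eq_zero] at h1
    have h2 : C p + C q * X = 0 := by
      apply eq_zero_of_dvd_of_natDegree_lt h1
      rw [hdeg, add_comm]
      exact Nat.lt_succ_of_le natDegree_linear_le
    constructor
    · simpa using congrArg (coeff · 0) h2
    · simpa using congrArg (coeff · 1) h2
  have hspan : ∀ z, ∃ p q, z = ψ p + ψ q * y := by
    intro z
    obtain ⟨g, rfl⟩ := AdjoinRoot.mk_surjective z
    obtain ⟨a, b, hab⟩ := exists_eq_X_add_C_of_natDegree_le_one (p := g %ₘ f)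
      (by have := natDegree_modByMonic_lt g hmon (by rintro h; simp [h] at hdeg); omega)
    refine ⟨b, a, ?_⟩
    conv_lhs => rw [← modByMonic_add_div g f]
    rw [hab]
    simp [ψ, y, add_comm]
  have : FunctionField (ZMod 3) (AdjoinRoot f) :=
    (AdjoinRoot.powerBasis hmon.ne_zero).finite
  have two_ne : (2 : RatFunc (ZMod 3)) ≠ 0 := by
    intro h2
    have h3 := congrArg (algebraMap (ZMod 3)[X] (RatFunc (ZMod 3))) three_eq_zero
    rw [map_ofNat, map_zero] at h3
    exact one_ne_zero (show (1 : RatFunc (ZMod 3)) = 0 by linear_combination h3 - h2)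
  have : Algebra.IsSeparable (RatFunc (ZMod 3)) (AdjoinRoot f) := by
    have hysep : IsSeparable (RatFunc (ZMod 3)) y := by
      have hfsep : f.Separable := by
        rw [hf]
        refine separable_X_pow_sub_C _ (by exact_mod_cast two_ne) ?_
        simpa using cubicD_ne_zero
      exact hfsep.of_dvd (minpoly.dvd _ _ (AdjoinRoot.eval₂_root f))
    rw [Algebra.isSeparable_def]
    intro z
    obtain ⟨p, q, rfl⟩ := hspan z
    exact Field.isSeparable_add (isSeparable_algebraMap p)
      (Field.isSeparable_mul (isSeparable_algebraMap q) hysep)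
  have hyint : IsIntegral (ZMod 3)[X] y := by
    refine IsIntegral.of_pow (n := 2) (by norm_num) ?_
    rw [hy, ← hψ]
    exact isIntegral_algebraMap
  let Y : FunctionField.ringOfIntegers (ZMod 3) (AdjoinRoot f) := ⟨y, hyint⟩
  have hcard := classGroup_card Y ?_ ?_ ?_
  · exact ⟨isCyclic_of_prime_card (p := 2) hcard, hcard⟩
  · apply Subtype.ext
    exact hy.trans (hψ _).symm
  · rintro ⟨z, hz⟩
    obtain ⟨p, q, rfl⟩ := hspan z
    have hz' : IsIntegral (ZMod 3)[X] (ψ p + ψ q * y) := hz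
    -- the conjugation `y ↦ -y`
    let σ : AdjoinRoot f →ₐ[RatFunc (ZMod 3)] AdjoinRoot f :=
      AdjoinRoot.liftAlgHom f (Algebra.ofId _ _) (-y) (by
        rw [heval, neg_sq, hy]
        exact sub_self _)
    have hσ : σ (ψ p + ψ q * y) = ψ p - ψ q * y := by
      have h1 : σ y = -y := by simp [σ, y]
      rw [map_add, map_mul, h1]
      simp only [ψ, AlgHom.commutes]
      ring
    have hconj : IsIntegral (ZMod 3)[X] (ψ p - ψ q * y) := by
      rw [← hσ]
      exact hz'.map (σ.restrictScalars (ZMod 3)[X])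
    have descend : ∀ r, IsIntegral (ZMod 3)[X] (ψ r) → ∃ s, algebraMap (ZMod 3)[X] _ s = r := by
      intro r hr
      exact IsIntegrallyClosed.isIntegral_iff.1
        ((isIntegral_algebraMap_iff ψ.injective).1 hr)
    -- the constant `2` is the inverse of `2` in `𝔽₃`
    have half : IsIntegral (ZMod 3)[X] (algebraMap (ZMod 3)[X] (AdjoinRoot f) (C 2)) :=
      isIntegral_algebraMap
    have hfour : algebraMap (ZMod 3)[X] (AdjoinRoot f) (C 2) * 2 = 1 := by
      have h3 := congrArg (algebraMap (ZMod 3)[X] (AdjoinRoot f)) three_eq_zero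
      rw [map_ofNat, map_zero] at h3
      rw [C_ofNat, map_ofNat]
      linear_combination h3
    obtain ⟨p, rfl⟩ := descend p (by
      have e : ψ p = algebraMap (ZMod 3)[X] (AdjoinRoot f) (C 2) *
          ((ψ p + ψ q * y) + (ψ p - ψ q * y)) := by linear_combination (-ψ p) * hfour
      rw [e]
      exact half.mul (hz'.add hconj))
    have hqy : IsIntegral (ZMod 3)[X] (ψ q * y) := by
      have e : ψ q * y = (ψ (algebraMap _ _ p) + ψ q * y) - algebraMap (ZMod 3)[X] _ p := by
        rw [hψ]; ring
      rw [e]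
      exact hz'.sub isIntegral_algebraMap
    obtain ⟨r, hr⟩ := descend (q ^ 2 * algebraMap _ _ cubicD) (by
      have e : ψ (q ^ 2 * algebraMap _ _ cubicD) = (ψ q * y) ^ 2 := by
        rw [mul_pow, hy, map_mul, map_pow]
      rw [e]
      exact hqy.pow 2)
    obtain ⟨q, rfl⟩ := exists_of_sq_mul_cubicD q r hr.symm
    refine ⟨p, q, Subtype.ext ?_⟩
    show _ = algebraMap (ZMod 3)[X] (AdjoinRoot f) p + algebraMap (ZMod 3)[X] (AdjoinRoot f) q * y
    rw [hψ, hψ]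
  · intro p q h
    have h' : ψ (algebraMap _ _ p) + ψ (algebraMap _ _ q) * y = 0 := by
      rw [← hψ, ← hψ]
      exact congrArg Subtype.val h
    obtain ⟨h1, h2⟩ := hind _ _ h'
    exact ⟨by simpa using h1, by simpa using h2⟩
end

section
/- Let F_4 = F_2(α) where α^2 + α + 1 = 0, and let K = F_4(x)(y) where y satisfies y^2 + x·y + α·x(x^2 + α·x + α) = 0 (this quadratic polynomial in y is irreducible over F_4(x)). Then the ideal class group Cl(O_K), where O_K is the integral closure of F_4[x] in K, is cyclic of order 2. -/
open Polynomial

/-!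
Write `k = F_4`, `g = α x (x² + α x + α)` and `O = O_K`, and let `P` be the ideal `(x, y)`.

`O` is `k[x] ⊕ k[x] y`: if `a + b y` with `a, b ∈ k(x)` is integral, its trace `b x` (in
characteristic two) and its norm `a² - a b x + b² g` are polynomials, and since `x` divides `g`
exactly once this forces `a` and `b` to be polynomials (`exists_polynomial_of_trace_norm`,
`isQuadraticModel_ringOfIntegers`).

The class group of such an `O` is computed from the fact that `dim_k O / (w)` is the degree of the
norm of `w`. For `w = p + q y` with `q ≠ 0` this degree is at least `3`, whereas a generator of `P`
would divide `x`, of norm `x²`, and could not lie in `k[x]`; so `P` is not principal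
(`not_isPrincipal`). On the other hand, let `I` be a nonzero ideal of codimension `d`. The
`p + q y` with `2 deg p ≤ d + 1` and `2 deg q + 3 ≤ d + 1` form a space of dimension at least
`d + 1`, so some nonzero `w ∈ I` has `dim O / (w) ≤ d + 1` (`exists_small`). Either `I = (w)`, or
`I / (w)` is a line on which `x` and `y` act by scalars `c` and `e`, where `(c, e)` is a rational
point of the curve. A trace computation in `F_4` shows that `(0, 0)` is the only affine rational
point (`rational_point`), so `I P ⊆ (w)`, and then `I P = (w)` as `P` is maximal
(`exists_mul_eq`). Hence every class is trivial or the inverse of the nontrivial class of `P`.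
-/

/-! ### Class group of the ring `k[x] ⊕ k[x] y` -/

section Abstract

variable {k O : Type*} [Field k] [CommRing O] [Algebra k[X] O]

/-- `O` is the free `k[x]`-module with basis `1, y`, where `y ^ 2 + x y + g = 0`. Here `x` is the
image of `X`; the basis property is split into existence and uniqueness of coordinates. -/
structure IsQuadraticModel (g : k[X]) (y : O) : Prop where
  eqn : y ^ 2 + algebraMap k[X] O X * y + algebraMap k[X] O g = 0
  exists_repr : ∀ z : O, ∃ p q : k[X], z = algebraMap k[X] O p + algebraMap k[X] O q * y
  indep : ∀ p q : k[X], algebraMap k[X] O p + algebraMap k[X] O q * y = 0 → p = 0 ∧ q = 0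

namespace IsQuadraticModel

variable {g : k[X]} {y : O}

lemma repr_inj (h : IsQuadraticModel g y) {p q r s : k[X]}
    (e : algebraMap k[X] O p + algebraMap k[X] O q * y =
      algebraMap k[X] O r + algebraMap k[X] O s * y) : p = r ∧ q = s := by
  have := h.indep (p - r) (q - s) (by simp only [map_sub]; linear_combination e)
  exact ⟨sub_eq_zero.1 this.1, sub_eq_zero.1 this.2⟩

lemma exists_basis (h : IsQuadraticModel g y) :
    ∃ b : Module.Basis (Fin 2) k[X] O, b 0 = 1 ∧ b 1 = y := by
  have hli : LinearIndependent k[X] ![(1 : O), y] := by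
    rw [LinearIndependent.pair_iff]
    intro s t hst
    apply h.indep
    rw [Algebra.smul_def, Algebra.smul_def, mul_one] at hst
    exact hst
  have hsp : ⊤ ≤ Submodule.span k[X] (Set.range ![(1 : O), y]) := by
    rintro z -
    obtain ⟨p, q, rfl⟩ := h.exists_repr z
    rw [Matrix.range_cons_cons_empty, Submodule.mem_span_pair]
    exact ⟨p, q, by simp [Algebra.smul_def]⟩
  exact ⟨Module.Basis.mk hli hsp, by simp, by simp⟩

lemma norm_eq (h : IsQuadraticModel g y) (p q : k[X]) :
    Algebra.norm k[X] (algebraMap k[X] O p + algebraMap k[X] O q * y) =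
      p ^ 2 - p * q * X + q ^ 2 * g := by
  obtain ⟨b, hb0, hb1⟩ := h.exists_basis
  have key (r s : k[X]) : b.repr (algebraMap k[X] O r + algebraMap k[X] O s * y) =
      Finsupp.single 0 r + Finsupp.single 1 s := by
    have : algebraMap k[X] O r + algebraMap k[X] O s * y = r • b 0 + s • b 1 := by
      simp [hb0, hb1, Algebra.smul_def]
    rw [this]
    simp
  have e1 : (algebraMap k[X] O p + algebraMap k[X] O q * y) * y =
      algebraMap k[X] O (- (q * g)) + algebraMap k[X] O (p - q * X) * y := by
    simp only [map_sub, map_mul, map_neg]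
    linear_combination (algebraMap k[X] O q) * h.eqn
  rw [Algebra.norm_eq_matrix_det b, Matrix.det_fin_two]
  simp only [Algebra.leftMulMatrix_eq_repr_mul, hb0, hb1, mul_one, e1, key]
  simp
  ring

/-- The ideal `(x, y)` is the kernel of the evaluation of `p + q y` at the point `(0, 0)`. -/
lemma mem_span_iff (h : IsQuadraticModel g y) (hg : g.eval 0 = 0) (p q : k[X]) :
    algebraMap k[X] O p + algebraMap k[X] O q * y ∈ Ideal.span {algebraMap k[X] O X, y} ↔
      p.eval 0 = 0 := by
  rw [Ideal.mem_span_pair]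
  constructor
  · rintro ⟨u, v, e⟩
    obtain ⟨a, b, rfl⟩ := h.exists_repr u
    obtain ⟨c, d, rfl⟩ := h.exists_repr v
    have : p = a * X - d * g ∧ q = b * X + c - d * X := by
      apply h.repr_inj
      rw [← e]
      simp only [map_sub, map_mul, map_add]
      linear_combination (algebraMap k[X] O d) * h.eqn
    rw [this.1]
    simp [hg]
  · intro hp
    have : X ∣ p := by rw [X_dvd_iff, coeff_zero_eq_eval_zero, hp]
    obtain ⟨r, rfl⟩ := this
    exact ⟨algebraMap k[X] O r, algebraMap k[X] O q, by rw [map_mul, mul_comm (algebraMap k[X] O r)]⟩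

/-- The summands `p ^ 2` and `q ^ 2 * g` of the norm have degrees of different parity, and the middle
one has smaller degree than one of them, so no cancellation of leading terms occurs. -/
lemma three_le_natDegree_norm {g : k[X]} (hg3 : g.natDegree = 3) (p : k[X]) {q : k[X]}
    (hq : q ≠ 0) :
    3 ≤ (p ^ 2 - p * q * X + q ^ 2 * g).natDegree := by
  have hg0 : g ≠ 0 := by rintro rfl; simp at hg3
  have h3 : (q ^ 2 * g).natDegree = 2 * q.natDegree + 3 := by
    rw [natDegree_mul (pow_ne_zero _ hq) hg0, natDegree_pow, hg3]
  have h2 : (p * q * X).natDegree ≤ p.natDegree + q.natDegree + 1 := by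
    refine natDegree_mul_le.trans (add_le_add natDegree_mul_le natDegree_X_le)
  have h1 : (p ^ 2).natDegree = 2 * p.natDegree := natDegree_pow _ _
  rcases le_or_gt p.natDegree (q.natDegree + 1) with hc | hc
  · have : (p ^ 2 - p * q * X).natDegree < (q ^ 2 * g).natDegree :=
      (natDegree_sub_le _ _).trans_lt (by omega)
    rw [natDegree_add_eq_right_of_natDegree_lt this]
    omega
  · have e : p ^ 2 - p * q * X + q ^ 2 * g = p ^ 2 + (q ^ 2 * g - p * q * X) := by ring
    have : (q ^ 2 * g - p * q * X).natDegree < (p ^ 2).natDegree :=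
      (natDegree_sub_le _ _).trans_lt (by omega)
    rw [e, natDegree_add_eq_left_of_natDegree_lt this]
    omega

/-- The ideal `(x, y)` is not principal: a generator dividing `x` has norm of degree at most `2`, hence
lies in `k[x]`; dividing `y` it is constant, while the ideal contains no nonzero constant. -/
lemma not_isPrincipal [IsDomain O] (h : IsQuadraticModel g y) (hg : g.eval 0 = 0)
    (hg3 : g.natDegree = 3) :
    ¬ (Ideal.span {algebraMap k[X] O X, y}).IsPrincipal := by
  rintro ⟨w, hw⟩
  rw [Ideal.submodule_span_eq] at hw
  have hx : algebraMap k[X] O X ∈ Ideal.span {w} := hw ▸ Ideal.subset_span (by simp)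
  have hy : y ∈ Ideal.span {w} := hw ▸ Ideal.subset_span (by simp)
  have hwP : w ∈ Ideal.span {algebraMap k[X] O X, y} := hw ▸ Ideal.mem_span_singleton_self w
  rw [Ideal.mem_span_singleton] at hx hy
  obtain ⟨p, q, rfl⟩ := h.exists_repr w
  obtain ⟨u, hu⟩ := hx
  obtain ⟨v, hv⟩ := hy
  rw [h.mem_span_iff hg] at hwP
  by_cases hq : q = 0
  · subst hq
    obtain ⟨r, s, rfl⟩ := h.exists_repr v
    have := h.repr_inj (p := 0) (q := 1) (r := p * r) (s := p * s) (by
      simp only [map_mul, map_zero, map_one]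
      simp only [map_zero] at hv
      linear_combination hv)
    have := congrArg (eval 0) this.2
    simp [hwP] at this
  · have hN : (Algebra.norm k[X] (algebraMap k[X] O X)) = X ^ 2 := by
      simpa using h.norm_eq X 0
    rw [hu, map_mul, h.norm_eq] at hN
    have := natDegree_le_of_dvd (Dvd.intro _ hN) (pow_ne_zero 2 X_ne_zero)
    have := three_le_natDegree_norm hg3 p hq
    rw [natDegree_X_pow] at *
    omega

section Dim

variable [Algebra k O] [IsScalarTower k k[X] O]

lemma finrank_quotient [IsDomain O] (h : IsQuadraticModel g y) {p q : k[X]}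
    (hw : algebraMap k[X] O p + algebraMap k[X] O q * y ≠ 0) :
    Module.finrank k (O ⧸ Ideal.span {algebraMap k[X] O p + algebraMap k[X] O q * y}) =
      (p ^ 2 - p * q * X + q ^ 2 * g).natDegree := by
  obtain ⟨b, -, -⟩ := h.exists_basis
  rw [finrank_quotient_span_eq_natDegree_norm b hw, h.norm_eq]

lemma finiteDimensional_quotient [IsDomain O] (h : IsQuadraticModel g y) {I : Ideal O} (hI : I ≠ ⊥) :
    FiniteDimensional k (O ⧸ I) := by
  obtain ⟨w, hwI, hw0⟩ := Submodule.exists_mem_ne_zero_of_ne_bot hI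
  obtain ⟨p, q, rfl⟩ := h.exists_repr w
  -- multiplying by `x` makes the dimension visibly positive
  have e : algebraMap k[X] O (p * X) + algebraMap k[X] O (q * X) * y =
      (algebraMap k[X] O p + algebraMap k[X] O q * y) * algebraMap k[X] O X := by
    simp only [map_mul]; ring
  have hX : algebraMap k[X] O X ≠ 0 := fun h0 => X_ne_zero (h.indep X 0 (by simp [h0])).1
  have hw1 : algebraMap k[X] O (p * X) + algebraMap k[X] O (q * X) * y ≠ 0 := by
    rw [e]; exact mul_ne_zero hw0 hX
  have hN : p ^ 2 - p * q * X + q ^ 2 * g ≠ 0 := by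
    obtain ⟨b, -, -⟩ := h.exists_basis
    rw [← h.norm_eq]
    have := Module.Free.of_basis b
    have := Module.Finite.of_basis b
    exact Algebra.norm_ne_zero_iff.2 hw0
  have hfin : FiniteDimensional k
      (O ⧸ Ideal.span {algebraMap k[X] O (p * X) + algebraMap k[X] O (q * X) * y}) := by
    apply Module.finite_of_finrank_pos
    rw [h.finrank_quotient hw1]
    have : (p * X) ^ 2 - p * X * (q * X) * X + (q * X) ^ 2 * g =
      (p ^ 2 - p * q * X + q ^ 2 * g) * X ^ 2 := by ring
    rw [this, natDegree_mul hN (pow_ne_zero _ X_ne_zero), natDegree_X_pow]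
    omega
  have hle : Ideal.span {algebraMap k[X] O (p * X) + algebraMap k[X] O (q * X) * y} ≤ I := by
    rw [Ideal.span_singleton_le_iff_mem, e]
    exact I.mul_mem_right _ hwI
  exact Module.Finite.of_surjective (Ideal.Quotient.factorₐ k hle).toLinearMap
    (Ideal.Quotient.factor_surjective hle)

/-- A weak Riemann–Roch statement: a nonzero ideal of codimension `d` contains a nonzero `w` such
that `(w)` has codimension at most `d + 1`. The witness is found in the span of the elements
`p + q y` with `2 deg p ≤ d + 1` and `2 deg q + 3 ≤ d + 1`, whose dimension exceeds `d`. -/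
lemma exists_small [IsDomain O] (h : IsQuadraticModel g y) (hg3 : g.natDegree = 3) {I : Ideal O}
    (hI : I ≠ ⊥) :
    ∃ w ∈ I, w ≠ 0 ∧
      Module.finrank k (O ⧸ Ideal.span {w}) ≤ Module.finrank k (O ⧸ I) + 1 := by
  have := h.finiteDimensional_quotient hI
  set d := Module.finrank k (O ⧸ I) with hd
  let ψ : (degreeLT k ((d + 1) / 2 + 1) × degreeLT k (d / 2)) →ₗ[k] O :=
    LinearMap.coprod
      ((Algebra.linearMap k[X] O).restrictScalars k ∘ₗ Submodule.subtype _)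
      ((LinearMap.mulRight k y) ∘ₗ (Algebra.linearMap k[X] O).restrictScalars k ∘ₗ
        Submodule.subtype _)
  have hψ (v) : ψ v = algebraMap k[X] O v.1.1 + algebraMap k[X] O v.2.1 * y := rfl
  have hfr (n : ℕ) : Module.finrank k (degreeLT k n) = n := by
    rw [(degreeLTEquiv k n).finrank_eq]; simp
  have hfd (n : ℕ) : Module.Finite k (degreeLT k n) :=
    Module.Finite.equiv (degreeLTEquiv k n).symm
  have hker : LinearMap.ker ((Ideal.Quotient.mkₐ k I).toLinearMap ∘ₗ ψ) ≠ ⊥ := by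
    apply LinearMap.ker_ne_bot_of_finrank_lt
    rw [Module.finrank_prod, hfr, hfr]
    omega
  obtain ⟨⟨⟨p, hp⟩, ⟨q, hq⟩⟩, hv, hv0⟩ := Submodule.exists_mem_ne_zero_of_ne_bot hker
  have hw0 : algebraMap k[X] O p + algebraMap k[X] O q * y ≠ 0 := by
    intro h0
    apply hv0
    obtain ⟨rfl, rfl⟩ := h.indep _ _ h0
    rfl
  refine ⟨algebraMap k[X] O p + algebraMap k[X] O q * y, ?_, hw0, ?_⟩
  · exact Ideal.Quotient.eq_zero_iff_mem.1 hv
  · rw [h.finrank_quotient hw0]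
    rw [mem_degreeLT] at hp hq
    have hp' : p.natDegree ≤ (d + 1) / 2 := by
      rw [natDegree_le_iff_degree_le]
      exact Order.le_of_lt_succ (by exact_mod_cast hp)
    have h1 : (p ^ 2).natDegree = 2 * p.natDegree := natDegree_pow _ _
    by_cases hq0 : q = 0
    · subst hq0
      simp only [mul_zero, zero_mul, sub_zero, ne_eq, OfNat.ofNat_ne_zero, not_false_eq_true,
        zero_pow, add_zero]
      omega
    have hq' : q.natDegree < d / 2 := (natDegree_lt_iff_degree_lt hq0).2 hq
    have h3 : (q ^ 2 * g).natDegree ≤ 2 * q.natDegree + 3 := by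
      refine natDegree_mul_le.trans ?_
      rw [natDegree_pow, hg3]
    have h2 : (p * q * X).natDegree ≤ p.natDegree + q.natDegree + 1 :=
      natDegree_mul_le.trans (add_le_add natDegree_mul_le natDegree_X_le)
    refine (natDegree_add_le _ _).trans (max_le ((natDegree_sub_le _ _).trans (max_le ?_ ?_)) ?_)
      <;> omega

/-- Provided `(0, 0)` is the only rational point of `Y ^ 2 + X Y + g(X) = 0`, a nonzero ideal `I` is
principal or becomes principal after multiplication by `(x, y)`. -/
lemma exists_mul_eq [IsDedekindDomain O] (h : IsQuadraticModel g y) (hg : g.eval 0 = 0)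
    (hg3 : g.natDegree = 3) (hpt : ∀ c e : k, e ^ 2 + c * e + g.eval c = 0 → c = 0 ∧ e = 0)
    {I : Ideal O} (hI : I ≠ ⊥) :
    ∃ w ≠ 0, I = Ideal.span {w} ∨ I * Ideal.span {algebraMap k[X] O X, y} = Ideal.span {w} := by
  obtain ⟨w, hwI, hw0, hle⟩ := h.exists_small hg3 hI
  refine ⟨w, hw0, or_iff_not_imp_left.2 fun hne => ?_⟩
  have hW : Ideal.span {w} ≤ I := (Ideal.span_singleton_le_iff_mem _).2 hwI
  have hfin := h.finiteDimensional_quotient (I := Ideal.span {w}) (by simpa using hw0)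
  -- `I / (w)` is the kernel of `O / (w) → O / I`, hence at most one-dimensional
  let φ := (Ideal.Quotient.factorₐ k hW).toLinearMap
  have hφ : Function.Surjective φ := Ideal.Quotient.factor_surjective hW
  have hdim : Module.finrank k (LinearMap.ker φ) ≤ 1 := by
    have := LinearMap.finrank_range_add_finrank_ker φ
    rw [LinearMap.range_eq_top.2 hφ, finrank_top] at this
    omega
  obtain ⟨⟨v, hv⟩, hgen⟩ := finrank_le_one_iff.1 hdim
  obtain ⟨v, rfl⟩ := Ideal.Quotient.mk_surjective v
  have hvI : v ∈ I := Ideal.Quotient.eq_zero_iff_mem.1 hv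
  have hscal (z : O) (hz : z ∈ I) : ∃ c : k, z - algebraMap k O c * v ∈ Ideal.span {w} := by
    obtain ⟨c, hc⟩ := hgen ⟨Ideal.Quotient.mk _ z, Ideal.Quotient.eq_zero_iff_mem.2 hz⟩
    refine ⟨c, ?_⟩
    have hc' := congrArg Subtype.val hc
    rw [← Ideal.Quotient.mk_eq_mk_iff_sub_mem, ← Algebra.smul_def]
    exact hc'.symm
  obtain ⟨c, hc⟩ := hscal _ (I.mul_mem_left (algebraMap k[X] O X) hvI)
  obtain ⟨e, he⟩ := hscal _ (I.mul_mem_left y hvI)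
  have hC (a : k) : algebraMap k O a = algebraMap k[X] O (C a) :=
    IsScalarTower.algebraMap_apply k k[X] O a
  -- `x` and `y` act on the line `I / (w)` by the scalars `c` and `e`, so `(c, e)` lies on the curve
  have hpoly (r : k[X]) : algebraMap k[X] O (r - C (r.eval c)) * v ∈ Ideal.span {w} := by
    obtain ⟨s, hs⟩ := X_sub_C_dvd_sub_C_eval (a := c) (p := r)
    rw [hs]
    have := Ideal.mul_mem_left _ (algebraMap k[X] O s) hc
    convert this using 1
    rw [hC]; simp only [map_mul, map_sub]; ring
  have hval : algebraMap k O (e ^ 2 + c * e + g.eval c) * v ∈ Ideal.span {w} := by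
    have h1 := Ideal.mul_mem_left _ (y + algebraMap k O e + algebraMap k O c) he
    have h2 := Ideal.mul_mem_left _ y hc
    have h3 := hpoly g
    have := (Ideal.neg_mem_iff _).2 (add_mem (add_mem h1 h2) h3)
    convert this using 1
    simp only [map_add, map_mul, map_pow, map_sub, ← hC]
    linear_combination v * h.eqn
  have hzero : e ^ 2 + c * e + g.eval c = 0 := by
    by_contra hn
    apply hne
    refine le_antisymm ?_ hW
    have hvW : v ∈ Ideal.span {w} := by
      have := Ideal.mul_mem_left _ (algebraMap k O (e ^ 2 + c * e + g.eval c)⁻¹) hval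
      rwa [← mul_assoc, ← map_mul, inv_mul_cancel₀ hn, map_one, one_mul] at this
    intro z hz
    obtain ⟨a, ha⟩ := hscal z hz
    simpa using add_mem ha (Ideal.mul_mem_left _ (algebraMap k O a) hvW)
  obtain ⟨rfl, rfl⟩ := hpt c e hzero
  simp only [map_zero, zero_mul, sub_zero] at hc he
  have hPI : I * Ideal.span {algebraMap k[X] O X, y} ≤ Ideal.span {w} := by
    rw [Ideal.mul_le]
    intro z hz t ht
    obtain ⟨a, ha⟩ := hscal z hz
    have hvt : t * v ∈ Ideal.span {w} := by
      obtain ⟨r, s, rfl⟩ := Ideal.mem_span_pair.1 ht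
      have := add_mem (Ideal.mul_mem_left _ r hc) (Ideal.mul_mem_left _ s he)
      convert this using 1; ring
    have := add_mem (Ideal.mul_mem_left _ t ha) (Ideal.mul_mem_left _ (algebraMap k O a) hvt)
    convert this using 1; ring
  -- `(w) = I J` with `(x, y) ≤ J ≠ ⊤`, and `(x, y)` is maximal
  obtain ⟨J, hJ⟩ := Ideal.dvd_iff_le.2 hW
  rw [hJ] at hPI ⊢
  have hPJ : Ideal.span {algebraMap k[X] O X, y} ≤ J :=
    Ideal.dvd_iff_le.1 ((mul_dvd_mul_iff_left (by simpa using hI)).1 (Ideal.dvd_iff_le.2 hPI))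
  have hJtop : J ≠ ⊤ := by
    rintro rfl
    exact hne (by rw [hJ, Ideal.mul_top])
  congr 1
  refine le_antisymm hPJ fun z hz => ?_
  obtain ⟨p, q, rfl⟩ := h.exists_repr z
  rw [h.mem_span_iff hg]
  by_contra hp
  apply hJtop
  have h1 : algebraMap k[X] O (p - C (p.eval 0)) + algebraMap k[X] O q * y ∈ J :=
    hPJ ((h.mem_span_iff hg _ _).2 (by simp))
  have h2 : algebraMap k[X] O (C (p.eval 0)) ∈ J := by
    have := sub_mem hz h1
    rw [map_sub] at this
    convert this using 1; ring
  refine Ideal.eq_top_of_isUnit_mem _ h2 ?_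
  exact ((isUnit_C.2 (isUnit_iff_ne_zero.2 hp))).map _

end Dim

/-- The class group consists of the trivial class and the inverse of the class of `(x, y)`. -/
theorem card_classGroup [IsDedekindDomain O] (h : IsQuadraticModel g y) (hg : g.eval 0 = 0)
    (hg3 : g.natDegree = 3) (hpt : ∀ c e : k, e ^ 2 + c * e + g.eval c = 0 → c = 0 ∧ e = 0) :
    Nat.card (ClassGroup O) = 2 := by
  let _ : Algebra k O := ((algebraMap k[X] O).comp C).toAlgebra
  have : IsScalarTower k k[X] O := IsScalarTower.of_algebraMap_eq fun _ => rfl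
  have hX : algebraMap k[X] O X ≠ 0 := fun h0 => X_ne_zero (h.indep X 0 (by simp [h0])).1
  have hP0 : Ideal.span {algebraMap k[X] O X, y} ∈ nonZeroDivisors (Ideal O) := by
    rw [mem_nonZeroDivisors_iff_ne_zero]
    intro h0
    apply hX
    rw [← Ideal.mem_bot, ← Ideal.zero_eq_bot, ← h0]
    exact Ideal.subset_span (by simp)
  rw [Nat.card_eq_two_iff]
  refine ⟨1, (ClassGroup.mk0 ⟨_, hP0⟩)⁻¹, ?_, ?_⟩
  · intro h1
    rw [eq_comm, inv_eq_one, ClassGroup.mk0_eq_one_iff] at h1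
    exact h.not_isPrincipal hg hg3 h1
  · refine Set.eq_univ_of_forall fun c => ?_
    obtain ⟨⟨I, hI⟩, rfl⟩ := ClassGroup.mk0_surjective c
    obtain ⟨w, hw0, hw | hw⟩ :=
      h.exists_mul_eq hg hg3 hpt (I := I) (mem_nonZeroDivisors_iff_ne_zero.1 hI)
    · left
      rw [ClassGroup.mk0_eq_one_iff]
      exact ⟨w, hw⟩
    · right
      rw [Set.mem_singleton_iff, ClassGroup.mk0_eq_mk0_inv_iff]
      exact ⟨w, hw0, hw⟩

end IsQuadraticModel
end Abstract

/-! ### The ring of integers and the rational points -/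

section Concrete

variable {k : Type*} [Field k]

/-- An element `P + Q y` of `k(x)(y)` whose trace and norm over `k(x)` are polynomials has polynomial
coordinates. The hypothesis that `X` divides `g` exactly once (regularity of the curve above
`x = 0`) is what removes the possible denominator `X`. -/
lemma exists_polynomial_of_trace_norm {g h : k[X]} (hgh : g = X * h) (hh : h.eval 0 ≠ 0)
    {P Q : RatFunc k} {t n : k[X]} (ht : Q * RatFunc.X = algebraMap k[X] (RatFunc k) t)
    (hn : P ^ 2 - P * Q * RatFunc.X + Q ^ 2 * algebraMap k[X] (RatFunc k) g =
      algebraMap k[X] (RatFunc k) n) :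
    ∃ p q : k[X], P = algebraMap k[X] (RatFunc k) p ∧ Q = algebraMap k[X] (RatFunc k) q := by
  have hX : algebraMap k[X] (RatFunc k) X = RatFunc.X := RatFunc.algebraMap_X
  have hinj : Function.Injective (algebraMap k[X] (RatFunc k)) := RatFunc.algebraMap_injective k
  have hX0 : (RatFunc.X : RatFunc k) ≠ 0 := RatFunc.X_ne_zero
  have hint : IsIntegral k[X] (RatFunc.X * P) := by
    refine ⟨X ^ 2 + (C (-(X * t)) * X + C (t ^ 2 * g - n * X ^ 2)), ?_, ?_⟩
    · exact monic_X_pow_add (degree_linear_lt.trans_le le_rfl)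
    · simp only [eval₂_add, eval₂_mul, eval₂_pow, eval₂_X, eval₂_C]
      simp only [map_sub, map_mul, map_neg, map_pow, hX, ← hn, ← ht]
      ring
  obtain ⟨m, hm⟩ := IsIntegrallyClosed.isIntegral_iff.1 hint
  have hrel : m ^ 2 - X * t * m + t ^ 2 * (X * h) = n * X ^ 2 := by
    apply hinj
    simp only [map_sub, map_mul, map_add, map_pow, hX, ← hn, ← ht, hm, hgh]
    ring
  have hmX : X ∣ m := by
    refine (prime_X (R := k)).dvd_of_dvd_pow (n := 2) ⟨n * X + t * m - t ^ 2 * h, ?_⟩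
    linear_combination hrel
  obtain ⟨p, rfl⟩ := hmX
  have htX : X ∣ t := by
    have h1 : X ∣ t ^ 2 * h := by
      refine ⟨n - p ^ 2 + t * p, mul_left_cancel₀ (X_ne_zero (R := k)) ?_⟩
      linear_combination hrel
    rcases (prime_X (R := k)).dvd_or_dvd h1 with h2 | h2
    · exact prime_X.dvd_of_dvd_pow h2
    · rw [X_dvd_iff, coeff_zero_eq_eval_zero] at h2
      exact absurd h2 hh
  obtain ⟨q, rfl⟩ := htX
  refine ⟨p, q, mul_left_cancel₀ hX0 ?_, mul_left_cancel₀ hX0 ?_⟩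
  · rw [← hm, map_mul, hX]
  · rw [mul_comm, ht, map_mul, hX]

variable {f : (RatFunc k)[X]} {g : k[X]}

/-- The ring of integers of `k(x)(y)`, `y ^ 2 + x y + g = 0`, is `k[x] ⊕ k[x] y`. -/
lemma isQuadraticModel_ringOfIntegers [CharP k 2] [Fact (Irreducible f)] {h : k[X]}
    (hgh : g = X * h) (hh : h.eval 0 ≠ 0)
    (hf : f = X ^ 2 + C RatFunc.X * X + C (algebraMap k[X] (RatFunc k) g)) :
    ∃ y : FunctionField.ringOfIntegers k (AdjoinRoot f), IsQuadraticModel g y := by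
  set ι := algebraMap (RatFunc k) (AdjoinRoot f) with hι
  set A := algebraMap k[X] (RatFunc k) with hA
  have hX : A X = RatFunc.X := RatFunc.algebraMap_X
  have hιA (p : k[X]) : algebraMap k[X] (AdjoinRoot f) p = ι (A p) :=
    IsScalarTower.algebraMap_apply k[X] (RatFunc k) (AdjoinRoot f) p
  have hAinj : Function.Injective A := RatFunc.algebraMap_injective k
  have hmonic : f.Monic := by
    rw [hf, add_assoc]
    exact monic_X_pow_add (degree_linear_lt.trans_le le_rfl)
  have hdeg : f.natDegree = 2 := by
    rw [hf]
    simpa using natDegree_quadratic (a := (1 : RatFunc k)) (b := RatFunc.X) (c := A g) one_ne_zero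
  set r := AdjoinRoot.root f with hr
  have heval (φ : RatFunc k →+* AdjoinRoot f) (v : AdjoinRoot f) :
      eval₂ φ v f = v ^ 2 + φ RatFunc.X * v + φ (A g) :=
    (congrArg (eval₂ φ v) hf).trans (by simp)
  have hroot : r ^ 2 + ι RatFunc.X * r + ι (A g) = 0 := by
    rw [← heval]
    exact AdjoinRoot.eval₂_root f
  have hlin (P Q : RatFunc k) : AdjoinRoot.mk f (C Q * X + C P) = ι P + ι Q * r := by
    simp [hι, hr, AdjoinRoot.algebraMap_eq, add_comm]
  have hrep (z : AdjoinRoot f) : ∃ P Q : RatFunc k, z = ι P + ι Q * r := by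
    obtain ⟨p, rfl⟩ := AdjoinRoot.mk_surjective z
    have hlt : (p %ₘ f).natDegree ≤ 1 := by
      have := natDegree_modByMonic_lt p hmonic (by rintro h1; simp [h1] at hdeg)
      omega
    obtain ⟨Q, P, hQP⟩ := exists_eq_X_add_C_of_natDegree_le_one hlt
    refine ⟨P, Q, ?_⟩
    rw [← hlin, ← hQP, ← sub_eq_zero, ← map_sub, AdjoinRoot.mk_eq_zero]
    exact ⟨p /ₘ f, by linear_combination -(modByMonic_add_div p f)⟩
  have hind (P Q : RatFunc k) (h0 : ι P + ι Q * r = 0) : P = 0 ∧ Q = 0 := by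
    rw [← hlin, AdjoinRoot.mk_eq_zero] at h0
    have := eq_zero_of_dvd_of_natDegree_lt h0
      (by rw [hdeg]; exact natDegree_linear_le.trans_lt one_lt_two)
    exact ⟨by simpa using congrArg (coeff · 0) this, by simpa using congrArg (coeff · 1) this⟩
  have hrint : IsIntegral k[X] r := by
    refine ⟨X ^ 2 + (C X * X + C g), monic_X_pow_add (degree_linear_lt.trans_le le_rfl), ?_⟩
    simp only [eval₂_add, eval₂_mul, eval₂_pow, eval₂_X, eval₂_C, hιA, hX]
    linear_combination hroot
  -- the nontrivial automorphism of `K` over `k(x)`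
  let σ : AdjoinRoot f →ₐ[RatFunc k] AdjoinRoot f :=
    AdjoinRoot.liftAlgHom f (Algebra.ofId _ _) (-(ι RatFunc.X) - r) (by
      rw [heval]
      simp only [RingHom.coe_coe, Algebra.ofId_apply]
      linear_combination hroot)
  have hσ (P Q : RatFunc k) : σ (ι P + ι Q * r) = ι P + ι Q * (-(ι RatFunc.X) - r) := by
    simp only [map_add, map_mul, hι, AlgHom.commutes]
    congr 2
    exact AdjoinRoot.liftAlgHom_root ..
  have hdesc (P : RatFunc k) (hP : IsIntegral k[X] (ι P)) : ∃ p, A p = P :=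
    IsIntegrallyClosed.isIntegral_iff.1
      ((isIntegral_algHom_iff (IsScalarTower.toAlgHom k[X] (RatFunc k) (AdjoinRoot f))
        (FaithfulSMul.algebraMap_injective _ _)).1 hP)
  have h2 : (2 : RatFunc k) = 0 := by
    have : (2 : k) = 0 := CharTwo.two_eq_zero
    have := congrArg (algebraMap k (RatFunc k)) this
    rwa [map_ofNat, map_zero] at this
  have hintegral (z : AdjoinRoot f) (hz : IsIntegral k[X] z) :
      ∃ p q : k[X], z = ι (A p) + ι (A q) * r := by
    obtain ⟨P, Q, rfl⟩ := hrep z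
    have hz' : IsIntegral k[X] (σ (ι P + ι Q * r)) := hz.map (σ.restrictScalars k[X])
    rw [hσ] at hz'
    obtain ⟨t, ht⟩ := hdesc (Q * RatFunc.X) (by
      have h2' : (2 : AdjoinRoot f) = 0 := by
        have := congrArg ι h2
        rwa [map_ofNat, map_zero] at this
      have e : ι (Q * RatFunc.X) = -((ι P + ι Q * r) + (ι P + ι Q * (-(ι RatFunc.X) - r))) := by
        rw [map_mul]
        linear_combination ι P * h2'
      rw [e]
      exact (hz.add hz').neg)
    obtain ⟨n, hn⟩ := hdesc (P ^ 2 - P * Q * RatFunc.X + Q ^ 2 * A g) (by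
      have e : ι (P ^ 2 - P * Q * RatFunc.X + Q ^ 2 * A g) =
          (ι P + ι Q * r) * (ι P + ι Q * (-(ι RatFunc.X) - r)) := by
        simp only [map_add, map_sub, map_mul, map_pow]
        linear_combination (ι Q) ^ 2 * hroot
      rw [e]
      exact hz.mul hz')
    obtain ⟨p, q, rfl, rfl⟩ := exists_polynomial_of_trace_norm hgh hh ht.symm hn.symm
    exact ⟨p, q, rfl⟩
  refine ⟨⟨r, hrint⟩, ?_, ?_, ?_⟩
  · apply Subtype.ext
    change r ^ 2 + algebraMap k[X] (AdjoinRoot f) X * r + algebraMap k[X] (AdjoinRoot f) g = 0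
    rw [hιA, hιA, hX, hroot]
  · rintro ⟨z, hz⟩
    obtain ⟨p, q, e⟩ := hintegral z hz
    refine ⟨p, q, Subtype.ext ?_⟩
    change z = algebraMap k[X] (AdjoinRoot f) p + algebraMap k[X] (AdjoinRoot f) q * r
    rw [hιA, hιA, e]
  · intro p q e
    have e' : algebraMap k[X] (AdjoinRoot f) p + algebraMap k[X] (AdjoinRoot f) q * r = 0 :=
      congrArg Subtype.val e
    rw [hιA, hιA] at e'
    have := hind _ _ e'
    exact ⟨hAinj (by rw [this.1, map_zero]), hAinj (by rw [this.2, map_zero])⟩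

/-- Noetherianity comes from the basis `1, y`, so separability of the extension is not needed. -/
lemma isDedekindDomain_ringOfIntegers [Fact (Irreducible f)]
    {y : FunctionField.ringOfIntegers k (AdjoinRoot f)} (h : IsQuadraticModel g y) :
    IsDedekindDomain (FunctionField.ringOfIntegers k (AdjoinRoot f)) := by
  obtain ⟨b, -, -⟩ := h.exists_basis
  have : Module.Finite k[X] (FunctionField.ringOfIntegers k (AdjoinRoot f)) := .of_basis b
  have : FunctionField k (AdjoinRoot f) :=
    (AdjoinRoot.powerBasis (Fact.out : Irreducible f).ne_zero).finite
  have : IsNoetherianRing (FunctionField.ringOfIntegers k (AdjoinRoot f)) :=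
    IsNoetherianRing.of_finite k[X] _
  have : Ring.DimensionLEOne (FunctionField.ringOfIntegers k (AdjoinRoot f)) :=
    Ring.DimensionLEOne.integralClosure k[X] (AdjoinRoot f)
  have : IsDedekindRing (FunctionField.ringOfIntegers k (AdjoinRoot f)) := { }
  exact { }

/-- The only affine point of the curve over a field with four elements is `(0, 0)`. -/
lemma rational_point {α : k} [CharP k 2] (hα : α ^ 2 + α + 1 = 0) (hk : ∀ a : k, a ^ 4 = a)
    {c e : k} (h : e ^ 2 + c * e + α * c * (c ^ 2 + α * c + α) = 0) : c = 0 ∧ e = 0 := by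
  have h2 : (2 : k) = 0 := CharTwo.two_eq_zero
  by_cases hc : c = 0
  · subst hc
    simpa using h
  exfalso
  have hc3 : c ^ 3 = 1 := mul_left_cancel₀ hc (by linear_combination hk c)
  set z := e * c ^ 2 with hz
  have hz4 : z ^ 4 = z := hk z
  set S := α * c + α ^ 2 + α ^ 2 * c ^ 2 with hS
  -- dividing the equation by `c ^ 2` (multiplying by `c ^ 4`) gives `(e / c) ^ 2 + e / c = S`
  have h1 : z ^ 2 + z + S = 0 := by
    linear_combination c ^ 4 * h - (e * c ^ 2 + α * c * (c ^ 3 + 1) + α ^ 2 * (c ^ 3 + 1) +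
      α ^ 2 * c ^ 2) * hc3
  -- `S` has trace `1` over the prime field, while `z ^ 2 + z` has trace `0`
  have hS2 : S ^ 2 + S = 1 := by
    linear_combination (α ^ 3 * c + α ^ 3 * c ^ 3 + α ^ 4 * c ^ 2 + α ^ 2 * c ^ 2 + α * c - 1) * h2 +
      α ^ 4 * c * hc3 + ((1 + c) * α * (α - 1) + 1) * hα
  refine one_ne_zero (α := k) ?_
  linear_combination -hS2 + hz4 - (z ^ 2 + z + S - 2 * (z + S) + 1) * h1 + (z + S - z * S) * h2

end Concrete

theorem class_group_statement_9
    (α : GaloisField 2 2) (hα : α ^ 2 + α + 1 = 0)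
    (f : Polynomial (RatFunc (GaloisField 2 2)))
    (hf : f = X ^ 2 + C RatFunc.X * X +
      C (RatFunc.C α * RatFunc.X *
        (RatFunc.X ^ 2 + RatFunc.C α * RatFunc.X + RatFunc.C α)))
    [Fact (Irreducible f)] :
    IsCyclic (ClassGroup (FunctionField.ringOfIntegers (GaloisField 2 2) (AdjoinRoot f))) ∧
      Nat.card (ClassGroup (FunctionField.ringOfIntegers (GaloisField 2 2) (AdjoinRoot f))) = 2 := by
  have hα0 : α ≠ 0 := by rintro rfl; simp at hα
  have hk (a : GaloisField 2 2) : a ^ 4 = a := by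
    have := Fintype.ofFinite (GaloisField 2 2)
    have hcard : Fintype.card (GaloisField 2 2) = 4 := by
      rw [← Nat.card_eq_fintype_card, GaloisField.card 2 2 two_ne_zero]; norm_num
    rw [← hcard, FiniteField.pow_card]
  let g : (GaloisField 2 2)[X] := X * (C α * (X ^ 2 + C α * X + C α))
  have hfg : f = X ^ 2 + C RatFunc.X * X + C (algebraMap (GaloisField 2 2)[X] (RatFunc _) g) := by
    rw [hf]
    simp only [g, map_mul, map_add, map_pow, RatFunc.algebraMap_X, RatFunc.algebraMap_C]
    ring
  have hg3 : g.natDegree = 3 := by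
    simp only [g]
    rw [mul_comm, natDegree_mul_X (by
      intro h0
      have := congrArg (eval 0) h0
      simp [hα0] at this), natDegree_C_mul hα0]
    have := natDegree_quadratic (a := (1 : GaloisField 2 2)) (b := α) (c := α) one_ne_zero
    rw [C_1, one_mul] at this
    rw [this]
  obtain ⟨y, hy⟩ := isQuadraticModel_ringOfIntegers (g := g) rfl (by simp [hα0]) hfg
  have := isDedekindDomain_ringOfIntegers hy
  have hcard := hy.card_classGroup (by simp [g]) hg3 (fun c e hce =>
    rational_point hα hk (by
      simp only [g, eval_mul, eval_add, eval_pow, eval_X, eval_C] at hce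
      linear_combination hce))
  have : Fact (Nat.Prime 2) := ⟨Nat.prime_two⟩
  exact ⟨isCyclic_of_prime_card hcard, hcard⟩
end

section
/- Let K = F_2(x)(y) where y satisfies y^2 + x(x + 1)·y + x(x + 1)(x^3 + x + 1) = 0 (this quadratic polynomial in y is irreducible over F_2(x)). Then the ideal class group Cl(O_K), where O_K is the integral closure of F_2[x] in K, has order 4 and exponent two; that is, Cl(O_K) is isomorphic to (Z/2Z) × (Z/2Z). -/
open Polynomial

/-!
The curve `y ^ 2 + h y + h g = 0` over `F_2`, with `h = x (x + 1)` and `g = x ^ 3 + x + 1`, has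
genus two, a single ramified place at infinity, and a smooth affine part. Its integral closure is
therefore `F_2[x] ⊕ F_2[x] y` (`integral_coord`, through traces, norms and divisibility at `x` and
`x + 1`), and everything else is a computation in this ring `O`, abstracted as `IsCurveRing`.

The ideals `(u, y)` for `u ∣ h` satisfy `(u, y) ^ 2 = (u)`, and `(x, y) (x + 1, y) = (h, y)`. None of
the three nontrivial ones is principal, since the norm of `a + b y` with `b ≠ 0` has degree at least
`5` (`five_le_natDegree_N`). This gives a Klein four-group of classes.

No other class exists (`mk0_cases`): after division by its content an ideal has the form
`(u, v + y)` with `deg v < deg u`. If `deg u ≥ 3`, multiplication by a suitable ideal `J` yields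
`(v + y)`, where `J` contains the norm of `v + y` divided by `u`, a polynomial of degree below
`deg u` (`exists_inverse`). By descent one reaches `deg u ≤ 2`, and there `u` divides the norm of
`v + y` only for `u = 1, x, x + 1, h` and `v = 0` (`small_ideal`), because `x` and `x + 1` ramify
while `x ^ 2 + x + 1` is inert.
-/


namespace ClassGroupEleven

/-! ### Polynomials over `F_2` and the norm form -/

/-- The coefficient of `y` in the equation of the curve. -/
noncomputable def h : (ZMod 2)[X] := X * (X + 1)

/-- The cofactor of `h` in the constant term of the equation of the curve. -/
noncomputable def g : (ZMod 2)[X] := X ^ 3 + X + 1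

theorem two_eq_zero : (2 : (ZMod 2)[X]) = 0 := CharTwo.two_eq_zero

theorem X_add_one : (X + 1 : (ZMod 2)[X]) = X + C 1 := by simp

theorem natDegree_h : h.natDegree = 2 := by
  unfold h
  rw [X_add_one, natDegree_mul X_ne_zero (X_add_C_ne_zero 1), natDegree_X, natDegree_X_add_C]

theorem natDegree_g : g.natDegree = 3 := by
  unfold g; compute_degree!

theorem h_ne_zero : h ≠ 0 := by
  intro e; simpa [e] using natDegree_h

theorem g_ne_zero : g ≠ 0 := by
  intro e; simpa [e] using natDegree_g

theorem natDegree_hg : (h * g).natDegree = 5 := by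
  rw [natDegree_mul h_ne_zero g_ne_zero, natDegree_h, natDegree_g]

/-- The norm of `a + b y`. -/
noncomputable def N (a b : (ZMod 2)[X]) : (ZMod 2)[X] := a ^ 2 + a * b * h + b ^ 2 * (h * g)

/-- The norm has large degree off `F_2[x]`: the place at infinity is ramified, so that the terms
`a ^ 2` and `b ^ 2 h g` cannot cancel. -/
theorem five_le_natDegree_N (a : (ZMod 2)[X]) {b : (ZMod 2)[X]} (hb : b ≠ 0) :
    5 ≤ (N a b).natDegree := by
  have h3 : (b ^ 2 * (h * g)).natDegree = 2 * b.natDegree + 5 := by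
    rw [natDegree_mul (pow_ne_zero 2 hb) (mul_ne_zero h_ne_zero g_ne_zero), natDegree_pow,
      natDegree_hg]
  have h2 : (a * b * h).natDegree ≤ a.natDegree + b.natDegree + 2 := by
    refine natDegree_mul_le.trans ?_
    rw [natDegree_h]
    have := natDegree_mul_le (p := a) (q := b)
    omega
  have h1 : (a ^ 2).natDegree = 2 * a.natDegree := natDegree_pow a 2
  unfold N
  by_cases hab : b.natDegree + 3 ≤ a.natDegree
  · rw [add_assoc, natDegree_add_eq_left_of_natDegree_lt]
    · omega
    · refine (natDegree_add_le _ _).trans_lt ?_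
      rw [max_lt_iff]
      omega
  · rw [natDegree_add_eq_right_of_natDegree_lt]
    · omega
    · refine (natDegree_add_le _ _).trans_lt ?_
      rw [max_lt_iff]
      omega

/-- Multiplicativity of the norm, in coordinates. -/
theorem N_mul (a b c d : (ZMod 2)[X]) :
    N (a * c + b * d * (h * g)) (a * d + b * c + b * d * h) = N a b * N c d := by
  unfold N
  linear_combination (2 * a * b * c * d * h * g + a * b * d ^ 2 * h ^ 2 * g +
    b ^ 2 * c * d * h ^ 2 * g + b ^ 2 * d ^ 2 * h ^ 3 * g) * two_eq_zero

theorem zmod_cases : ∀ a : ZMod 2, a = 0 ∨ a = 1 := by decide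

theorem cases_natDegree_le_one (v : (ZMod 2)[X]) (hv : v.natDegree ≤ 1) :
    v = C (v.coeff 1) * X + C (v.coeff 0) := eq_X_add_C_of_natDegree_le_one hv

theorem cases_natDegree_le_two (u : (ZMod 2)[X]) (hu : u.natDegree ≤ 2) (h0 : u ≠ 0) :
    u = 1 ∨ u = X ∨ u = X + 1 ∨ u = X ^ 2 ∨ u = (X + 1) ^ 2 ∨ u = h ∨ u = h + 1 := by
  have e := eq_quadratic_of_degree_le_two (natDegree_le_iff_degree_le.mp hu)
  unfold h
  have t : (X + 1 : (ZMod 2)[X]) ^ 2 = X ^ 2 + 1 := by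
    linear_combination X * two_eq_zero
  rw [t, mul_add, ← pow_two, mul_one]
  rcases zmod_cases (u.coeff 2) with h2 | h2 <;> rcases zmod_cases (u.coeff 1) with h1 | h1 <;>
    rcases zmod_cases (u.coeff 0) with h0' | h0' <;> rw [h2, h1, h0'] at e <;>
    simp at e <;> first | exact absurd e h0 | (rw [e]; simp)

/-- At a zero `c` of `h` (that is, at any element of `F_2`) the polynomial `N v 1` has no double
zero, because the curve is smooth there. So `(x - c) ^ 2` is not the least polynomial in any
primitive ideal. -/
theorem not_sq_dvd (v : (ZMod 2)[X]) (c : ZMod 2) : ¬ (X - C c) ^ 2 ∣ N v 1 := by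
  rintro ⟨w, hw⟩
  have hc : c = 0 ∨ c = 1 := zmod_cases c
  have hh : eval c h = 0 := by rcases hc with rfl | rfl <;> simp [h]; decide
  have hg : eval c g = 1 := by rcases hc with rfl | rfl <;> simp [g]; decide
  have hh' : eval c (derivative h) = 1 := by
    rcases hc with rfl | rfl <;> simp [h]; decide
  have e0 := congrArg (eval c) hw
  have e1 := congrArg (fun p => eval c (derivative p)) hw
  simp [N, hh] at e0
  simp [N, hh, hg, hh', e0, derivative_pow] at e1

theorem eval_eq_zero_of_dvd {u v : (ZMod 2)[X]} {c : ZMod 2} (hu : u ∣ N v 1) (hc : eval c u = 0) :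
    eval c v = 0 := by
  obtain ⟨w, hw⟩ := hu
  have hh : eval c h = 0 := by rcases zmod_cases c with rfl | rfl <;> simp [h]; decide
  have e0 := congrArg (eval c) hw
  simpa [N, hh, hc] using e0

/-- The prime `h + 1 = x ^ 2 + x + 1` is inert: modulo it `N v 1` is `x + d`, where `d` is the
coefficient of `x` in `v`, hence nonzero. -/
theorem not_inert_dvd (v : (ZMod 2)[X]) (hv : v.natDegree ≤ 1) : ¬ (h + 1) ∣ N v 1 := by
  intro hd
  have hdeg : (h + 1).natDegree = 2 := by
    rw [natDegree_add_eq_left_of_natDegree_lt] <;> simp [natDegree_h]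
  have e := cases_natDegree_le_one v hv
  set d := C (v.coeff 1)
  set s := C (v.coeff 0)
  -- Coefficients in `F_2` are idempotent.
  have sq : ∀ a : ZMod 2, (C a : (ZMod 2)[X]) ^ 2 = C a := by
    intro a; rcases zmod_cases a with rfl | rfl <;> simp
  have hd2 : d ^ 2 = d := sq _
  have hs2 : s ^ 2 = s := sq _
  have key : (h + 1) ∣ X + d := by
    have : X + d = N v 1 - (h + 1) * (d + v + g - X - 1) := by
      rw [e]
      unfold N h g
      linear_combination (d - d * s * X + d * X - X ^ 2) * two_eq_zero - X ^ 2 * hd2 - hs2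
    rw [this]
    exact dvd_sub hd (dvd_mul_right _ _)
  have := natDegree_le_of_dvd key (X_add_C_ne_zero _)
  rw [hdeg, natDegree_X_add_C] at this
  omega

/-! ### The coordinate ring and its ramified ideals -/

/-- `O` is a free `F_2[x]`-algebra on `1, y`, where `y ^ 2 = h y + h g`. The signs in the equation of
the curve are immaterial in characteristic two. -/
structure IsCurveRing (O : Type*) [CommRing O] [Algebra (ZMod 2)[X] O] (y : O) : Prop where
  rel : y ^ 2 = algebraMap _ O h * y + algebraMap _ O (h * g)
  span : ∀ z : O, ∃ a b : (ZMod 2)[X], z = algebraMap _ O a + algebraMap _ O b * y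
  indep : ∀ a b : (ZMod 2)[X], algebraMap _ O a + algebraMap _ O b * y = 0 → a = 0 ∧ b = 0

section CurveRing

open scoped nonZeroDivisors

variable {O : Type*} [CommRing O] [Algebra (ZMod 2)[X] O] {y : O}

local notation "ι" => algebraMap (Polynomial (ZMod 2)) O

theorem two_eq_zero' : (2 : O) = 0 := by
  have := congrArg (algebraMap (ZMod 2)[X] O) two_eq_zero
  rwa [map_ofNat, map_zero] at this

namespace IsCurveRing

theorem eq_zero (H : IsCurveRing O y) {a : (ZMod 2)[X]} (ha : ι a = 0) : a = 0 :=
  (H.indep a 0 (by simp [ha])).1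

theorem coord (H : IsCurveRing O y) {a b c d : (ZMod 2)[X]}
    (e : ι a + ι b * y = ι c + ι d * y) : a = c ∧ b = d := by
  have := H.indep (a - c) (b - d) (by simp only [map_sub]; linear_combination e)
  exact ⟨sub_eq_zero.mp this.1, sub_eq_zero.mp this.2⟩

theorem mul_eq (H : IsCurveRing O y) (a b c d : (ZMod 2)[X]) :
    (ι a + ι b * y) * (ι c + ι d * y) =
      ι (a * c + b * d * (h * g)) + ι (a * d + b * c + b * d * h) * y := by
  have := H.rel
  simp only [map_add, map_mul] at this ⊢
  linear_combination ι b * ι d * this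

/-- The norm of `v + y`, as the product with its conjugate: the conjugate of `y` is `y + h`. -/
theorem mul_conj (H : IsCurveRing O y) (v : (ZMod 2)[X]) :
    (ι v + y) * (ι v + ι h + y) = ι (N v 1) := by
  have := H.rel
  unfold N
  simp only [map_add, map_mul, map_pow, map_one] at this ⊢
  linear_combination this + (ι v * y + ι h * y) * (two_eq_zero' (O := O))

theorem N_one_ne_zero (v : (ZMod 2)[X]) : N v 1 ≠ 0 := by
  intro e
  have := five_le_natDegree_N v (one_ne_zero (α := (ZMod 2)[X]))
  simp [e] at this

/-- For `u ∣ h` the ideal `(u, y)` has square `(u)`: `y ^ 2` is divisible by `u`,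
and `u ^ 2`, `y ^ 2 - h y = u (h / u) g` generate `(u)` because `u` is prime to `(h / u) g`. -/
theorem ramified_sq (H : IsCurveRing O y) {u w : (ZMod 2)[X]} (hu : u * w = h)
    (hc : IsCoprime u (w * g)) :
    Ideal.span {ι u, y} ^ 2 = Ideal.span {ι u} := by
  have rel := H.rel
  rw [← hu] at rel
  apply le_antisymm
  · rw [pow_two, Ideal.span_mul_span', Ideal.span_le]
    rintro _ ⟨a, ha, b, hb, rfl⟩
    simp only [Set.mem_insert_iff, Set.mem_singleton_iff] at ha hb
    simp only [SetLike.mem_coe, Ideal.mem_span_singleton]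
    rcases ha with rfl | rfl
    · exact (dvd_refl _).mul_right _
    · rcases hb with rfl | rfl
      · exact (dvd_refl _).mul_left _
      · refine ⟨ι w * b + ι w * ι g, ?_⟩
        simp only [map_mul] at rel
        linear_combination rel
  · rw [Ideal.span_singleton_le_iff_mem]
    obtain ⟨p, q, hpq⟩ := hc
    have hu1 : ι u ∈ Ideal.span {ι u, y} := Ideal.subset_span (by simp)
    have hy1 : y ∈ Ideal.span {ι u, y} := Ideal.subset_span (by simp)
    have e : ι u = ι p * (ι u * ι u) + ι q * (y * y - ι w * (ι u * y)) := by
      have := congrArg ι hpq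
      simp only [map_mul, map_add, map_one] at this rel
      linear_combination (-ι u) * this - ι q * rel
    rw [pow_two]
    have key := add_mem (Ideal.mul_mem_left _ (ι p) (Ideal.mul_mem_mul hu1 hu1))
      (Ideal.mul_mem_left _ (ι q) (sub_mem (Ideal.mul_mem_mul hy1 hy1)
        (Ideal.mul_mem_left _ (ι w) (Ideal.mul_mem_mul hu1 hy1))))
    rwa [← e] at key

theorem ramified_mul : Ideal.span {ι X, y} * Ideal.span {ι (X + 1), y} = Ideal.span {ι h, y} := by
  apply le_antisymm
  · rw [Ideal.span_mul_span', Ideal.span_le]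
    have hh : ι h ∈ Ideal.span {ι h, y} := Ideal.subset_span (by simp)
    have hy : y ∈ Ideal.span {ι h, y} := Ideal.subset_span (by simp)
    rintro _ ⟨a, ha, b, hb, rfl⟩
    simp only [Set.mem_insert_iff, Set.mem_singleton_iff] at ha hb
    rcases ha with rfl | rfl
    · rcases hb with rfl | rfl
      · simpa [h] using hh
      · exact Ideal.mul_mem_left _ _ hy
    · exact Ideal.mul_mem_right _ _ hy
  · have h1 : ι X ∈ Ideal.span {ι X, y} := Ideal.subset_span (by simp)
    have h2 : ι (X + 1) ∈ Ideal.span {ι (X + 1), y} := Ideal.subset_span (by simp)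
    have hy1 : y ∈ Ideal.span {ι X, y} := Ideal.subset_span (by simp)
    have hy2 : y ∈ Ideal.span {ι (X + 1), y} := Ideal.subset_span (by simp)
    rw [Ideal.span_le]
    rintro z hz
    simp only [Set.mem_insert_iff, Set.mem_singleton_iff] at hz
    rcases hz with rfl | rfl
    · rw [h, map_mul]
      exact Ideal.mul_mem_mul h1 h2
    · have e : z = ι X * z + z * ι (X + 1) - 2 * (ι X * z) := by
        simp only [map_add, map_one]; ring
      rw [two_eq_zero', zero_mul, sub_zero] at e
      have key := add_mem (Ideal.mul_mem_mul h1 hy2) (Ideal.mul_mem_mul hy1 h2)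
      rwa [← e] at key

/-- A generator `α` of `(u, y)` divides `u`, so its norm divides `u ^ 2`, of degree at most `4`;
this forces `α` into `F_2[x]`, and then `α ∣ y` makes it a unit. -/
theorem ramified_not_principal (H : IsCurveRing O y) {u w : (ZMod 2)[X]} (hu : u * w = h)
    (hnu : ¬ IsUnit u) : ¬ (Ideal.span {ι u, y}).IsPrincipal := by
  rintro ⟨α, hα⟩
  rw [Ideal.submodule_span_eq] at hα
  have hu0 : u ≠ 0 := by rintro rfl; exact h_ne_zero (by simpa using hu.symm)
  have hdeg : u.natDegree ≤ 2 := by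
    exact (natDegree_le_of_dvd ⟨w, hu.symm⟩ h_ne_zero).trans natDegree_h.le
  have hu1 : ι u ∈ Ideal.span {α} := hα ▸ Ideal.subset_span (by simp)
  have hy1 : y ∈ Ideal.span {α} := hα ▸ Ideal.subset_span (by simp)
  rw [Ideal.mem_span_singleton] at hu1 hy1
  obtain ⟨t, ht⟩ := hu1
  obtain ⟨s, hs⟩ := hy1
  obtain ⟨a, b, rfl⟩ := H.span α
  obtain ⟨c, d, rfl⟩ := H.span t
  obtain ⟨c', d', rfl⟩ := H.span s
  rw [H.mul_eq] at ht hs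
  have hb : b = 0 := by
    by_contra hb
    obtain ⟨e1, e2⟩ := H.coord (c := u) (d := 0) (ht.symm.trans (by simp))
    have e := N_mul a b c d
    rw [e1, e2] at e
    have e' : u ^ 2 = N a b * N c d := by rw [← e]; simp [N]
    have := natDegree_le_of_dvd ⟨_, e'⟩ (pow_ne_zero 2 hu0)
    rw [natDegree_pow] at this
    have := five_le_natDegree_N a hb
    omega
  subst hb
  obtain ⟨e1, e2⟩ := H.coord (a := 0) (b := 1) (Eq.trans (by simp) hs)
  have ha : IsUnit a := IsUnit.of_mul_eq_one d' (by simpa using e2.symm)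
  have htop : (1 : O) ∈ Ideal.span {ι u, y} := by
    rw [hα, Ideal.mem_span_singleton]
    simpa using ((ha.map ι).dvd)
  obtain ⟨p, q, hpq⟩ := Ideal.mem_span_pair.mp htop
  obtain ⟨p0, p1, rfl⟩ := H.span p
  obtain ⟨q0, q1, rfl⟩ := H.span q
  have rel := H.rel
  have := H.coord (a := p0 * u + q1 * (h * g)) (b := p1 * u + q0 + q1 * h) (c := 1) (d := 0) (by
    simp only [map_add, map_mul, map_one, map_zero] at rel ⊢
    linear_combination hpq - ι q1 * rel)
  refine hnu (IsUnit.of_mul_eq_one (p0 + q1 * w * g) ?_)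
  rw [← this.1, ← hu]
  ring

/-! ### Contents, primitive ideals of small degree -/

/-- If `1` is not the `y`-coordinate of an element of `I`, then `I` is divisible by a nonunit
polynomial, namely the generator of the ideal of `y`-coordinates of `I`. -/
theorem exists_content (H : IsCurveRing O y) (I : Ideal O) (hI : ∀ v, ι v + y ∉ I) :
    ∃ c : (ZMod 2)[X], ¬ IsUnit c ∧ I ≤ Ideal.span {ι c} := by
  let K : Ideal (ZMod 2)[X] :=
    { carrier := {b | ∃ a, ι a + ι b * y ∈ I}
      zero_mem' := ⟨0, by simp⟩
      add_mem' := by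
        rintro b b' ⟨a, ha⟩ ⟨a', ha'⟩
        refine ⟨a + a', ?_⟩
        have := add_mem ha ha'
        convert this using 1
        simp only [map_add]; ring
      smul_mem' := by
        rintro c b ⟨a, ha⟩
        refine ⟨c * a, ?_⟩
        have := I.mul_mem_left (ι c) ha
        convert this using 1
        simp only [map_mul, smul_eq_mul]; ring }
  have hK : ∀ b, b ∈ K ↔ ∃ a, ι a + ι b * y ∈ I := fun b => Iff.rfl
  obtain ⟨c, hc⟩ := IsPrincipalIdealRing.principal K
  rw [Ideal.submodule_span_eq] at hc
  refine ⟨c, fun hu => ?_, fun z hz => ?_⟩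
  · have : (1 : (ZMod 2)[X]) ∈ K := by
      rw [hc, Ideal.mem_span_singleton]; exact hu.dvd
    obtain ⟨a, ha⟩ := (hK 1).mp this
    exact hI a (by simpa using ha)
  · obtain ⟨a, b, rfl⟩ := H.span z
    have h1 : c ∣ b := by
      rw [← Ideal.mem_span_singleton, ← hc, hK]; exact ⟨a, hz⟩
    have h2 : c ∣ a + b * h := by
      rw [← Ideal.mem_span_singleton, ← hc, hK]
      refine ⟨b * (h * g), ?_⟩
      have := I.mul_mem_left y hz
      convert this using 1
      have rel := H.rel
      simp only [map_mul, map_add] at rel ⊢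
      linear_combination (-ι b) * rel
    have h3 : c ∣ a := (dvd_add_left (h1.mul_right h)).mp h2
    rw [Ideal.mem_span_singleton]
    exact dvd_add (map_dvd ι h3) ((map_dvd ι h1).mul_right y)

/-- A primitive ideal whose least polynomial `u` has degree at most `2` is one of four: `u` divides
the norm of `v + y`, which rules out `x ^ 2`, `(x + 1) ^ 2` and `x ^ 2 + x + 1`, and makes `v`
vanish at the roots of `u`. -/
theorem small_ideal (H : IsCurveRing O y) {I : Ideal O} {u v : (ZMod 2)[X]} (hu0 : u ≠ 0)
    (hmin : ∀ p, ι p ∈ I → u ∣ p) (huI : ι u ∈ I) (hv : ι v + y ∈ I)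
    (hvu : v = 0 ∨ v.natDegree < u.natDegree) (hu2 : u.natDegree ≤ 2) :
    I = ⊤ ∨ I = Ideal.span {ι X, y} ∨ I = Ideal.span {ι (X + 1), y} ∨
      I = Ideal.span {ι h, y} := by
  have hN : u ∣ N v 1 := hmin _ (by rw [← H.mul_conj]; exact I.mul_mem_right _ hv)
  have hv1 : v.natDegree ≤ 1 := by
    rcases hvu with rfl | hvu
    · simp
    · omega
  have e := cases_natDegree_le_one v hv1
  have hspan : v = 0 → I = Ideal.span {ι u, y} := by
    rintro rfl
    have hy : y ∈ I := by simpa using hv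
    apply le_antisymm
    · intro z hz
      obtain ⟨a, b, rfl⟩ := H.span z
      obtain ⟨k, rfl⟩ := hmin a (by simpa using sub_mem hz (I.mul_mem_left (ι b) hy))
      rw [Ideal.mem_span_pair]
      exact ⟨ι k, ι b, by rw [map_mul]; ring⟩
    · rw [Ideal.span_le]
      rintro z hz
      simp only [Set.mem_insert_iff, Set.mem_singleton_iff] at hz
      rcases hz with rfl | rfl <;> assumption
  rcases cases_natDegree_le_two u hu2 hu0 with rfl | rfl | rfl | rfl | rfl | rfl | rfl
  · left
    rw [Ideal.eq_top_iff_one]; simpa using huI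
  · right; left
    apply hspan
    rcases hvu with hvu | hvu
    · exact hvu
    · have ev := eval_eq_zero_of_dvd (c := 0) hN (by simp)
      rw [natDegree_X, Nat.lt_one_iff] at hvu
      rw [eq_C_of_natDegree_eq_zero hvu] at ev ⊢
      simpa using ev
  · right; right; left
    apply hspan
    rcases hvu with hvu | hvu
    · exact hvu
    · have ev := eval_eq_zero_of_dvd (c := 1) hN (by simp; decide)
      rw [X_add_one, natDegree_X_add_C, Nat.lt_one_iff] at hvu
      rw [eq_C_of_natDegree_eq_zero hvu] at ev ⊢
      simpa using ev
  · exact absurd (by simpa using hN) (not_sq_dvd v 0)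
  · have : (X + 1 : (ZMod 2)[X]) = X - C 1 := by
      rw [map_one]; linear_combination two_eq_zero
    exact absurd (this ▸ hN) (not_sq_dvd v 1)
  · right; right; right
    apply hspan
    have ev0 := eval_eq_zero_of_dvd (c := 0) hN (by simp [h])
    have ev1 := eval_eq_zero_of_dvd (c := 1) hN (by simp [h]; decide)
    rw [e] at ev0 ev1 ⊢
    simp only [eval_add, eval_mul, eval_C, eval_X, mul_zero, zero_add, mul_one] at ev0 ev1
    rw [ev0, add_zero] at ev1
    simp [ev0, ev1]
  · exact absurd hN (not_inert_dvd v hv1)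

/-! ### The class group -/

section Dedekind

variable [IsDedekindDomain O]

theorem ramified_mem (H : IsCurveRing O y) {u : (ZMod 2)[X]} (hu0 : u ≠ 0) :
    Ideal.span {ι u, y} ∈ (Ideal O)⁰ := by
  rw [mem_nonZeroDivisors_iff_ne_zero, Ne, Submodule.zero_eq_bot, Ideal.span_eq_bot]
  exact fun e => hu0 (H.eq_zero (e _ (by simp)))

/-- The class of the ideal `(u, y)`. -/
noncomputable def cls (H : IsCurveRing O y) (u : (ZMod 2)[X]) (hu0 : u ≠ 0) : ClassGroup O :=
  ClassGroup.mk0 ⟨Ideal.span {ι u, y}, H.ramified_mem hu0⟩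

theorem cls_sq (H : IsCurveRing O y) {u w : (ZMod 2)[X]} (hu : u * w = h)
    (hc : IsCoprime u (w * g)) (hu0 : u ≠ 0) : H.cls u hu0 ^ 2 = 1 := by
  unfold cls
  rw [← map_pow, SubmonoidClass.mk_pow, ClassGroup.mk0_eq_one_iff]
  rw [H.ramified_sq hu hc]
  exact ⟨_, rfl⟩

theorem cls_ne_one (H : IsCurveRing O y) {u w : (ZMod 2)[X]} (hu : u * w = h)
    (hnu : ¬ IsUnit u) (hu0 : u ≠ 0) : H.cls u hu0 ≠ 1 := by
  unfold cls
  rw [Ne, ClassGroup.mk0_eq_one_iff]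
  exact H.ramified_not_principal hu hnu

theorem X_add_one_ne_zero : (X + 1 : (ZMod 2)[X]) ≠ 0 := X_add_C_ne_zero (1 : ZMod 2)

theorem cls_mul (H : IsCurveRing O y) :
    H.cls X X_ne_zero * H.cls (X + 1) X_add_one_ne_zero = H.cls h h_ne_zero := by
  unfold cls
  rw [← map_mul]
  congr 1
  exact Subtype.ext ramified_mul

theorem cls_X_sq (H : IsCurveRing O y) : H.cls X X_ne_zero ^ 2 = 1 := by
  refine H.cls_sq (w := X + 1) rfl ⟨X ^ 3 + X ^ 2 + X, 1, ?_⟩ _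
  unfold g
  linear_combination (X ^ 4 + X ^ 3 + X ^ 2 + X) * two_eq_zero

theorem cls_X_add_one_sq (H : IsCurveRing O y) :
    H.cls (X + 1) X_add_one_ne_zero ^ 2 = 1 := by
  refine H.cls_sq (w := X) (by unfold h; ring) ⟨X ^ 3 + X ^ 2 + 1, 1, ?_⟩ _
  unfold g
  linear_combination (X ^ 4 + X ^ 3 + X ^ 2 + X) * two_eq_zero

/-- Reduction: a primitive ideal `I = (u, v + y)` with `deg u ≥ 3` is inverse, in the class group,
to an ideal containing a polynomial of smaller degree, namely the norm of `v + y` divided by `u`. -/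
theorem exists_inverse (H : IsCurveRing O y) {I : Ideal O} {u v : (ZMod 2)[X]} (hu0 : u ≠ 0)
    (hmin : ∀ p, ι p ∈ I → u ∣ p) (huI : ι u ∈ I) (hv : ι v + y ∈ I)
    (hvu : v.natDegree < u.natDegree) (hu3 : 3 ≤ u.natDegree) :
    ∃ (J : Ideal O) (w : (ZMod 2)[X]), w ≠ 0 ∧ ι w ∈ J ∧ w.natDegree < u.natDegree ∧
      I * J = Ideal.span {ι v + y} := by
  have hN : ι (N v 1) ∈ I := by rw [← H.mul_conj]; exact I.mul_mem_right _ hv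
  obtain ⟨w, hw⟩ := hmin _ hN
  have hw0 : w ≠ 0 := by rintro rfl; exact N_one_ne_zero v (by simpa using hw)
  obtain ⟨J, hJ⟩ := Ideal.dvd_span_singleton.mpr hv
  refine ⟨J, w, hw0, ?_, ?_, hJ.symm⟩
  · have hI0 : I ≠ 0 := by
      rintro rfl
      exact hu0 (H.eq_zero (by simpa using huI))
    rw [← Ideal.span_singleton_le_iff_mem, ← Ideal.dvd_iff_le]
    refine (mul_dvd_mul_iff_left hI0).mp ?_
    rw [← hJ, Ideal.dvd_iff_le, Ideal.mul_le]
    intro z hz t ht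
    obtain ⟨t, rfl⟩ := Ideal.mem_span_singleton.mp ht
    obtain ⟨a, b, rfl⟩ := H.span z
    have : ι (a - b * v) ∈ I := by
      have := sub_mem hz (I.mul_mem_left (ι b) hv)
      convert this using 1
      simp only [map_sub, map_mul]; ring
    obtain ⟨k, hk⟩ := hmin _ this
    have hk' := congrArg ι hk
    have hw' := H.mul_conj v
    rw [hw] at hw'
    rw [Ideal.mem_span_singleton]
    refine ⟨ι w * t * ι b + t * ι k * (ι v + ι h + y), ?_⟩
    simp only [map_sub, map_mul] at hk' hw'
    linear_combination ι w * t * hk' - t * ι k * hw'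
  · have h1 : (N v 1).natDegree ≤ max (max (2 * v.natDegree) (v.natDegree + 2)) 5 := by
      unfold N
      refine (natDegree_add_le _ _).trans (max_le_max ((natDegree_add_le _ _).trans
        (max_le_max natDegree_pow_le ?_)) ?_)
      · rw [mul_one]; exact natDegree_mul_le.trans (by rw [natDegree_h])
      · rw [one_pow, one_mul, natDegree_hg]
    rw [hw, natDegree_mul hu0 hw0] at h1
    omega

/-- Every ideal class is one of the four classes of ramified ideals, by descent on the degree of a
polynomial contained in the ideal. -/
theorem mk0_cases (H : IsCurveRing O y) : ∀ (n : ℕ) (I : (Ideal O)⁰) (u : (ZMod 2)[X]),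
    u ≠ 0 → ι u ∈ (I : Ideal O) → u.natDegree = n →
    ClassGroup.mk0 I = 1 ∨ ClassGroup.mk0 I = H.cls X X_ne_zero ∨
      ClassGroup.mk0 I = H.cls (X + 1) X_add_one_ne_zero ∨
      ClassGroup.mk0 I = H.cls X X_ne_zero * H.cls (X + 1) X_add_one_ne_zero := by
  intro n
  induction n using Nat.strong_induction_on with
  | _ n ih =>
  intro I u hu0 huI hn
  subst hn
  -- One may take `u` of least degree, so that `u` generates the ideal of polynomials in `I`.
  by_cases hsmall : ∃ p, p ≠ 0 ∧ ι p ∈ (I : Ideal O) ∧ p.natDegree < u.natDegree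
  · obtain ⟨p, hp0, hpI, hp⟩ := hsmall
    exact ih _ hp I p hp0 hpI rfl
  push Not at hsmall
  have hmod : ∀ p : (ZMod 2)[X], p % u = 0 ∨ (p % u).natDegree < u.natDegree := by
    intro p
    by_cases h0 : p % u = 0
    · exact Or.inl h0
    · exact Or.inr (natDegree_lt_natDegree h0 (EuclideanDomain.mod_lt p hu0))
  have hmin : ∀ p, ι p ∈ (I : Ideal O) → u ∣ p := by
    intro p hp
    rw [← EuclideanDomain.mod_eq_zero]
    by_contra h0
    refine absurd ((hmod p).resolve_left h0) (not_lt.mpr (hsmall _ h0 ?_))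
    rw [EuclideanDomain.mod_eq_sub_mul_div, map_sub, map_mul]
    exact sub_mem hp (Ideal.mul_mem_right _ _ huI)
  by_cases hprim : ∃ v, ι v + y ∈ (I : Ideal O)
  · obtain ⟨v', hv'⟩ := hprim
    obtain ⟨v, hv, hvu⟩ : ∃ v, ι v + y ∈ (I : Ideal O) ∧
        (v = 0 ∨ v.natDegree < u.natDegree) := by
      refine ⟨v' % u, ?_, hmod v'⟩
      rw [EuclideanDomain.mod_eq_sub_mul_div, map_sub, map_mul, sub_add_eq_add_sub]
      exact sub_mem hv' (Ideal.mul_mem_right _ _ huI)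
    rcases le_or_gt u.natDegree 2 with hu2 | hu3
    · rw [H.cls_mul]
      rcases H.small_ideal hu0 hmin huI hv hvu hu2 with h1 | h1 | h1 | h1
      · left
        rw [show I = 1 from Subtype.ext (h1.trans Ideal.one_eq_top.symm), map_one]
      · right; left
        exact congrArg _ (Subtype.ext h1)
      · right; right; left
        exact congrArg _ (Subtype.ext h1)
      · right; right; right
        exact congrArg _ (Subtype.ext h1)
    · obtain ⟨J, w, hw0, hwJ, hwd, hIJ⟩ := H.exists_inverse hu0 hmin huI hv (by
        rcases hvu with rfl | hvu
        · simp; omega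
        · exact hvu) hu3
      have hJ : J ∈ (Ideal O)⁰ := by
        rw [mem_nonZeroDivisors_iff_ne_zero]
        rintro rfl
        exact hw0 (H.eq_zero (by simpa using hwJ))
      have e : ClassGroup.mk0 I * ClassGroup.mk0 ⟨J, hJ⟩ = 1 := by
        rw [← map_mul, show I * ⟨J, hJ⟩ = ⟨(I : Ideal O) * J, mul_mem I.2 hJ⟩ from rfl,
          ClassGroup.mk0_eq_one_iff, hIJ]
        exact ⟨_, rfl⟩
      have s0 := H.cls_X_sq
      have s1 := H.cls_X_add_one_sq
      rw [mul_eq_one_iff_eq_inv] at e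
      have key : ∀ c : ClassGroup O, c ^ 2 = 1 → c⁻¹ = c := fun c hc => by
        rw [inv_eq_iff_mul_eq_one, ← pow_two, hc]
      rcases ih _ hwd ⟨J, hJ⟩ w hw0 hwJ rfl with h1 | h1 | h1 | h1 <;> rw [h1] at e <;>
        rw [key _ (by simp [mul_pow, s0, s1])] at e <;> simp [e]
  -- An imprimitive ideal has the class of its quotient by its content.
  · obtain ⟨c, hc, hIc⟩ := H.exists_content I (fun v hv => hprim ⟨v, hv⟩)
    obtain ⟨I', hI'⟩ := Ideal.dvd_iff_le.mpr hIc
    have hI0 := mem_nonZeroDivisors_iff_ne_zero.mp I.2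
    have hIne : I' ∈ (Ideal O)⁰ := by
      rw [mem_nonZeroDivisors_iff_ne_zero]
      rintro rfl
      exact hI0 (by simpa using hI')
    have hc0 : Ideal.span {ι c} ∈ (Ideal O)⁰ := by
      rw [mem_nonZeroDivisors_iff_ne_zero]
      intro h0
      exact hI0 (by simp [hI', h0])
    have hcc0 : c ≠ 0 := by
      rintro rfl
      exact mem_nonZeroDivisors_iff_ne_zero.mp hc0 (by simp)
    have e : ClassGroup.mk0 I = ClassGroup.mk0 ⟨I', hIne⟩ := by
      have e1 : I = ⟨_, hc0⟩ * ⟨I', hIne⟩ := Subtype.ext hI'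
      have e2 : ClassGroup.mk0 ⟨_, hc0⟩ = 1 := by
        rw [ClassGroup.mk0_eq_one_iff]; exact ⟨_, rfl⟩
      rw [e1, map_mul, e2, one_mul]
    rw [e]
    rw [hI', Ideal.mem_span_singleton_mul] at huI
    obtain ⟨z, hz, hzu⟩ := huI
    obtain ⟨a, b, rfl⟩ := H.span z
    have e3 := H.coord (a := c * a) (b := c * b) (c := u) (d := 0) (by
      simp only [map_mul, map_zero]; linear_combination hzu)
    have hb : b = 0 := (mul_eq_zero.mp e3.2).resolve_left hcc0
    have ha0 : a ≠ 0 := by rintro rfl; exact hu0 (by simpa using e3.1.symm)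
    refine ih a.natDegree ?_ _ a ha0 (by simpa [hb] using hz) rfl
    rw [← e3.1, natDegree_mul hcc0 ha0]
    have := natDegree_pos_iff_degree_pos.mpr (degree_pos_of_ne_zero_of_nonunit hcc0 hc)
    omega

theorem classGroup_cases (H : IsCurveRing O y) (c : ClassGroup O) :
    c = 1 ∨ c = H.cls X X_ne_zero ∨ c = H.cls (X + 1) X_add_one_ne_zero ∨
      c = H.cls X X_ne_zero * H.cls (X + 1) X_add_one_ne_zero := by
  obtain ⟨I, rfl⟩ := ClassGroup.mk0_surjective c
  obtain ⟨z, hz, hz0⟩ := Submodule.exists_mem_ne_zero_of_ne_bot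
    (mem_nonZeroDivisors_iff_ne_zero.mp I.2)
  obtain ⟨a, b, rfl⟩ := H.span z
  -- The norm of a nonzero element of `I` is a nonzero polynomial in `I`.
  have e : (ι a + ι b * y) * (ι (a + b * h) + ι b * y) = ι (N a b) := by
    have rel := H.rel
    unfold N
    simp only [map_add, map_mul, map_pow] at rel ⊢
    linear_combination (ι b) ^ 2 * rel +
      (ι a * ι b * y + ι b ^ 2 * ι h * y) * (two_eq_zero' (O := O))
  refine H.mk0_cases _ I (N a b) ?_ (e ▸ Ideal.mul_mem_right _ _ hz) rfl
  by_cases hb : b = 0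
  · subst hb
    have : a ≠ 0 := by rintro rfl; simp at hz0
    simpa [N] using this
  · intro e
    have := five_le_natDegree_N a hb
    simp [e] at this

theorem isKleinFour (H : IsCurveRing O y) : IsKleinFour (ClassGroup O) := by
  have s0 := H.cls_X_sq
  have s1 := H.cls_X_add_one_sq
  have n0 : H.cls X X_ne_zero ≠ 1 := H.cls_ne_one (w := X + 1) rfl not_isUnit_X _
  have n1 : H.cls (X + 1) X_add_one_ne_zero ≠ 1 :=
    H.cls_ne_one (w := X) (by unfold h; ring)
      (not_isUnit_of_natDegree_pos _ (by rw [X_add_one, natDegree_X_add_C]; norm_num)) _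
  have n2 : H.cls X X_ne_zero * H.cls (X + 1) X_add_one_ne_zero ≠ 1 := by
    rw [H.cls_mul]
    exact H.cls_ne_one (w := 1) (mul_one _)
      (not_isUnit_of_natDegree_pos _ (by rw [natDegree_h]; norm_num)) _
  have all := H.classGroup_cases
  generalize H.cls X X_ne_zero = p at *
  generalize H.cls (X + 1) X_add_one_ne_zero = q at *
  have hq : q⁻¹ = q := by rw [inv_eq_iff_mul_eq_one, ← pow_two, s1]
  have hpq : p ≠ q := fun e => n2 (by rw [e, ← pow_two, s1])
  have hsq : ∀ c : ClassGroup O, c ^ 2 = 1 := by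
    intro c
    rcases all c with rfl | rfl | rfl | rfl <;> simp [mul_pow, s0, s1]
  constructor
  · have e : (Set.univ : Set (ClassGroup O)) = {1, p, q, p * q} := by
      ext c; simpa using all c
    classical
    rw [← Nat.card_congr (Equiv.Set.univ _), e, Nat.card_coe_set_eq,
      Set.ncard_insert_of_notMem, Set.ncard_insert_of_notMem, Set.ncard_pair]
    · simpa using n0
    · simp [hpq]
      exact n1
    · simp [n0.symm, n1.symm, n2.symm]
  · have : Nontrivial (ClassGroup O) := ⟨p, 1, n0⟩
    exact (Monoid.exponent_eq_prime_iff Nat.prime_two).mpr fun c hc =>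
      orderOf_eq_prime (hsq c) hc

end Dedekind

end IsCurveRing
end CurveRing


/-! ### The integral closure in the function field -/

section FunctionField

/-- The polynomial defining the function field of the curve. -/
noncomputable def F : (RatFunc (ZMod 2))[X] :=
  X ^ 2 + C (algebraMap (ZMod 2)[X] _ h) * X + C (algebraMap (ZMod 2)[X] _ (h * g))

theorem natDegree_F : F.natDegree = 2 := by unfold F; compute_degree!

theorem monic_F : F.Monic := by unfold F; monicity!

/-- Divisibility at one ramified prime `π`. If `z = (w + c y) / h` has norm `n`, then
`w ^ 2 + w c h + c ^ 2 h g = h ^ 2 n`, and this forces `π` to divide `w` and `c`. -/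
theorem dvd_step {π ρ w c n : (ZMod 2)[X]} (hp : Prime π) (hh : h = π * ρ)
    (hn : ¬ π ∣ ρ * g) (e : w ^ 2 + w * c * h + c ^ 2 * (h * g) = h ^ 2 * n) : π ∣ w ∧ π ∣ c := by
  rw [hh] at e
  have hw : π ∣ w := hp.dvd_of_dvd_pow (n := 2)
    ⟨π * ρ ^ 2 * n - w * c * ρ - c ^ 2 * ρ * g, by linear_combination e⟩
  refine ⟨hw, ?_⟩
  obtain ⟨w, rfl⟩ := hw
  have h1 : π * (c ^ 2 * (ρ * g)) = π * (π * (ρ ^ 2 * n - w ^ 2 - w * c * ρ)) := by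
    linear_combination e
  have h2 : π ∣ c ^ 2 * (ρ * g) := ⟨_, mul_left_cancel₀ hp.ne_zero h1⟩
  exact hp.dvd_of_dvd_pow ((hp.dvd_or_dvd h2).resolve_right hn)

theorem dvd_both {w c n : (ZMod 2)[X]}
    (e : w ^ 2 + w * c * h + c ^ 2 * (h * g) = h ^ 2 * n) : h ∣ w ∧ h ∣ c := by
  have hX1 : (X + 1 : (ZMod 2)[X]) = X - C 1 := by
    rw [map_one]; linear_combination two_eq_zero
  have h0 := dvd_step (π := X) (ρ := X + 1) prime_X rfl
    (by rw [X_dvd_iff, coeff_zero_eq_eval_zero]; simp [g]) e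
  have h1 := dvd_step (π := X + 1) (ρ := X) (hX1 ▸ prime_X_sub_C 1) (by unfold h; ring)
    (by rw [hX1, dvd_iff_isRoot]; simp [g]; decide) e
  have hc : IsCoprime (X : (ZMod 2)[X]) (X + 1) := ⟨-1, 1, by ring⟩
  exact ⟨hc.mul_dvd h0.1 h1.1, hc.mul_dvd h0.2 h1.2⟩

variable [Fact (Irreducible F)]

theorem isSeparable_F : Algebra.IsSeparable (RatFunc (ZMod 2)) (AdjoinRoot F) := by
  have hirr : Irreducible F := Fact.out
  have hs : F.Separable := by
    rw [separable_iff_derivative_ne_zero hirr]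
    have h2 : (2 : RatFunc (ZMod 2)) = 0 := two_eq_zero'
    have : derivative F = C (algebraMap (ZMod 2)[X] (RatFunc (ZMod 2)) h) := by
      simp [F, derivative_pow, h2]
    rw [this, Ne, C_eq_zero]
    exact fun e => h_ne_zero (IsFractionRing.injective (ZMod 2)[X] (RatFunc (ZMod 2))
      (by rw [e, map_zero]))
  have hr : IsSeparable (RatFunc (ZMod 2)) (AdjoinRoot.root F) := by
    unfold IsSeparable
    refine hs.of_dvd (minpoly.dvd _ _ ?_)
    rw [AdjoinRoot.aeval_eq, AdjoinRoot.mk_self]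
  rw [← IntermediateField.isSeparable_adjoin_simple_iff_isSeparable,
    IntermediateField.adjoin_root_eq_top] at hr
  exact AlgEquiv.Algebra.isSeparable IntermediateField.topEquiv

theorem root_rel : AdjoinRoot.root F ^ 2 =
    algebraMap (ZMod 2)[X] (AdjoinRoot F) h * AdjoinRoot.root F +
      algebraMap (ZMod 2)[X] (AdjoinRoot F) (h * g) := by
  have e := AdjoinRoot.mk_self (f := F)
  have h2 := two_eq_zero' (O := AdjoinRoot F)
  have t : ∀ p : (ZMod 2)[X], AdjoinRoot.of F (algebraMap _ _ p) =
    algebraMap (ZMod 2)[X] (AdjoinRoot F) p := fun p => rfl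
  conv_lhs at e => arg 2; unfold F
  simp only [map_add, map_pow, map_mul, AdjoinRoot.mk_X, AdjoinRoot.mk_C, t] at e ⊢
  linear_combination e - (algebraMap (ZMod 2)[X] (AdjoinRoot F) h * AdjoinRoot.root F +
    algebraMap (ZMod 2)[X] (AdjoinRoot F) h * algebraMap (ZMod 2)[X] (AdjoinRoot F) g) * h2

theorem isIntegral_root : IsIntegral (ZMod 2)[X] (AdjoinRoot.root F) := by
  refine ⟨X ^ 2 - C h * X - C (h * g), by monicity!, ?_⟩
  have := root_rel
  simp only [eval₂_sub, eval₂_mul, eval₂_C, eval₂_X, eval₂_pow]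
  linear_combination this

/-- The nontrivial automorphism `y ↦ y + h` of the function field. -/
theorem exists_conj : ∃ σ : AdjoinRoot F →ₐ[(ZMod 2)[X]] AdjoinRoot F,
    (∀ p : RatFunc (ZMod 2), σ (AdjoinRoot.of F p) = AdjoinRoot.of F p) ∧
    σ (AdjoinRoot.root F) = AdjoinRoot.root F + algebraMap (ZMod 2)[X] _ h := by
  refine ⟨AdjoinRoot.liftAlgHom F (IsScalarTower.toAlgHom (ZMod 2)[X] (RatFunc (ZMod 2)) _)
    (AdjoinRoot.root F + algebraMap (ZMod 2)[X] _ h) ?_, ?_, ?_⟩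
  · have h2 := two_eq_zero' (O := AdjoinRoot F)
    have rel := root_rel
    have t : ∀ p : (ZMod 2)[X], algebraMap (RatFunc (ZMod 2)) (AdjoinRoot F) (algebraMap _ _ p) =
      algebraMap (ZMod 2)[X] (AdjoinRoot F) p := fun p => rfl
    conv_lhs => arg 3; unfold F
    simp only [eval₂_add, eval₂_mul, eval₂_C, eval₂_X, eval₂_pow, RingHom.coe_coe,
      IsScalarTower.coe_toAlgHom', t, map_mul] at rel ⊢
    generalize algebraMap (ZMod 2)[X] (AdjoinRoot F) h = a at *
    generalize algebraMap (ZMod 2)[X] (AdjoinRoot F) g = b at *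
    generalize AdjoinRoot.root F = r at *
    linear_combination rel + (a * b + 2 * a * r + a ^ 2) * h2
  · intro p; rw [AdjoinRoot.liftAlgHom_of]; rfl
  · rw [AdjoinRoot.liftAlgHom_root]

theorem exists_coord (z : AdjoinRoot F) : ∃ p q : RatFunc (ZMod 2),
    z = AdjoinRoot.of F p + AdjoinRoot.of F q * AdjoinRoot.root F := by
  obtain ⟨P, rfl⟩ := AdjoinRoot.mk_surjective z
  have hd : (P %ₘ F).natDegree ≤ 1 := by
    have := natDegree_modByMonic_lt P monic_F (fun e => by simpa [e] using natDegree_F)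
    rw [natDegree_F] at this
    omega
  refine ⟨(P %ₘ F).coeff 0, (P %ₘ F).coeff 1, ?_⟩
  have e : AdjoinRoot.mk F P = AdjoinRoot.mk F (P %ₘ F) := by
    rw [AdjoinRoot.mk_eq_mk]
    exact ⟨P /ₘ F, by rw [modByMonic_eq_sub_mul_div]; ring⟩
  rw [e]
  conv_lhs => rw [eq_X_add_C_of_natDegree_le_one hd]
  simp [add_comm]

theorem coord_zero (p q : RatFunc (ZMod 2))
    (e : AdjoinRoot.of F p + AdjoinRoot.of F q * AdjoinRoot.root F = 0) : p = 0 ∧ q = 0 := by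
  have e' : AdjoinRoot.mk F (C q * X + C p) = 0 := by simpa [add_comm] using e
  rw [AdjoinRoot.mk_eq_zero] at e'
  have h0 : C q * X + C p = 0 := by
    by_contra h0
    have := natDegree_le_of_dvd e' h0
    rw [natDegree_F] at this
    have := natDegree_linear_le (a := q) (b := p)
    omega
  have c0 := congrArg (fun P => coeff P 0) h0
  have c1 := congrArg (fun P => coeff P 1) h0
  simp at c0 c1
  exact ⟨c0, c1⟩

theorem of_integral {p : RatFunc (ZMod 2)} {z : AdjoinRoot F} (hz : IsIntegral (ZMod 2)[X] z)
    (e : AdjoinRoot.of F p = z) : ∃ a : (ZMod 2)[X], algebraMap _ _ a = p := by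
  subst e
  exact IsIntegrallyClosed.isIntegral_iff.mp
    ((isIntegral_algebraMap_iff (algebraMap (RatFunc (ZMod 2)) (AdjoinRoot F)).injective).mp hz)

/-- The curve is smooth, so `1, y` is an integral basis. -/
theorem integral_coord {z : AdjoinRoot F} (hz : IsIntegral (ZMod 2)[X] z) :
    ∃ a b : (ZMod 2)[X], z = algebraMap _ _ a + algebraMap _ _ b * AdjoinRoot.root F := by
  obtain ⟨σ, hσ, hσr⟩ := exists_conj
  obtain ⟨p, q, rfl⟩ := exists_coord z
  have hz' := hz.map σ
  have h2 := two_eq_zero' (O := AdjoinRoot F)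
  have rel := root_rel
  have t : ∀ p : (ZMod 2)[X], algebraMap (ZMod 2)[X] (AdjoinRoot F) p =
    AdjoinRoot.of F (algebraMap _ _ p) := fun p => rfl
  rw [map_add, map_mul, hσ, hσ, hσr] at hz'
  have h1 := hz.add hz'
  have h3 := hz.mul hz'
  have hh := isIntegral_algebraMap (R := (ZMod 2)[X]) (A := AdjoinRoot F) (x := h)
  -- The trace of `z` is a polynomial `c`.
  obtain ⟨c, hc⟩ : ∃ c : (ZMod 2)[X], algebraMap _ _ c = q * algebraMap _ _ h := by
    apply of_integral h1
    rw [map_mul, ← t]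
    linear_combination -(AdjoinRoot.of F p + AdjoinRoot.of F q * AdjoinRoot.root F) * h2
  -- The norm of `z` is a polynomial `n`.
  obtain ⟨n, hn⟩ : ∃ n : (ZMod 2)[X], algebraMap _ _ n =
      p ^ 2 + p * q * algebraMap _ _ h + q ^ 2 * algebraMap _ _ (h * g) := by
    apply of_integral h3
    simp only [map_mul, map_add, map_pow] at rel ⊢
    simp only [← t]
    generalize algebraMap (ZMod 2)[X] (AdjoinRoot F) h = a at *
    generalize algebraMap (ZMod 2)[X] (AdjoinRoot F) g = b at *
    generalize AdjoinRoot.root F = r at *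
    generalize AdjoinRoot.of F p = P at *
    generalize AdjoinRoot.of F q = Q at *
    linear_combination -Q ^ 2 * rel - (P * Q * r + Q ^ 2 * r * a) * h2
  -- `h z - c y` is a polynomial `w`.
  obtain ⟨w, hw⟩ : ∃ w : (ZMod 2)[X], algebraMap _ _ w = algebraMap _ _ h * p := by
    apply of_integral ((hh.mul hz).sub ((isIntegral_algebraMap (x := c)).mul isIntegral_root))
    rw [t c, hc]
    simp only [map_mul, ← t]
    ring
  have e : w ^ 2 + w * c * h + c ^ 2 * (h * g) = h ^ 2 * n := by
    apply IsFractionRing.injective (ZMod 2)[X] (RatFunc (ZMod 2))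
    simp only [map_add, map_mul, map_pow] at hn ⊢
    rw [hn, hc, hw]
    ring
  have hh0 : algebraMap (ZMod 2)[X] (RatFunc (ZMod 2)) h ≠ 0 := fun e =>
    h_ne_zero (IsFractionRing.injective (ZMod 2)[X] (RatFunc (ZMod 2)) (by rw [e, map_zero]))
  obtain ⟨⟨a, ha⟩, ⟨b, hb⟩⟩ := dvd_both e
  refine ⟨a, b, ?_⟩
  rw [ha, map_mul] at hw
  rw [hb, map_mul, mul_comm] at hc
  rw [t, t, mul_left_cancel₀ hh0 hw, mul_right_cancel₀ hh0 hc]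

theorem exists_isCurveRing : ∃ y : FunctionField.ringOfIntegers (ZMod 2) (AdjoinRoot F),
    IsCurveRing _ y := by
  refine ⟨⟨AdjoinRoot.root F, isIntegral_root⟩, ?_, ?_, ?_⟩
  · exact Subtype.ext root_rel
  · intro z
    obtain ⟨a, b, e⟩ := integral_coord z.2
    exact ⟨a, b, Subtype.ext e⟩
  · intro a b e
    have inj := IsFractionRing.injective (ZMod 2)[X] (RatFunc (ZMod 2))
    have := coord_zero (algebraMap _ _ a) (algebraMap _ _ b) (congrArg Subtype.val e)
    exact ⟨inj (this.1.trans (map_zero _).symm), inj (this.2.trans (map_zero _).symm)⟩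

end FunctionField

end ClassGroupEleven

theorem class_group_statement_11
    (f : Polynomial (RatFunc (ZMod 2)))
    (hf : f = X ^ 2 + C (RatFunc.X * (RatFunc.X + 1)) * X + C (RatFunc.X * (RatFunc.X + 1) * (RatFunc.X ^ 3 + RatFunc.X + 1)))
    [Fact (Irreducible f)] :
    Nat.card (ClassGroup (FunctionField.ringOfIntegers (ZMod 2) (AdjoinRoot f))) = 4 ∧
      (∀ c : ClassGroup (FunctionField.ringOfIntegers (ZMod 2) (AdjoinRoot f)), c ^ 2 = 1) ∧
      Nonempty (ClassGroup (FunctionField.ringOfIntegers (ZMod 2) (AdjoinRoot f)) ≃* Multiplicative (ZMod 2 × ZMod 2)) := by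
  obtain rfl : f = ClassGroupEleven.F := by
    rw [hf]
    simp [ClassGroupEleven.F, ClassGroupEleven.h, ClassGroupEleven.g]
  have := ClassGroupEleven.isSeparable_F
  have : FunctionField (ZMod 2) (AdjoinRoot ClassGroupEleven.F) :=
    (AdjoinRoot.powerBasis' ClassGroupEleven.monic_F).finite
  obtain ⟨y, H⟩ := ClassGroupEleven.exists_isCurveRing
  have := H.isKleinFour
  exact ⟨IsKleinFour.card_four, fun c => by rw [pow_two, IsKleinFour.mul_self],
    IsKleinFour.nonempty_mulEquiv⟩
end

section
/- Let K = F_2(x)(y) where y satisfies y^2 + x(x + 1)·y + x(x + 1)(x^5 + x^3 + x^2 + x + 1) = 0 (this quadratic polynomial in y is irreducible over F_2(x)). Then the ideal class group Cl(O_K), where O_K is the integral closure of F_2[x] in K, has order 4 and exponent two; that is, Cl(O_K) is isomorphic to (Z/2Z) × (Z/2Z). -/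
open Polynomial

/-!
Write `A = X (X + 1)` and `g = X ^ 5 + X ^ 3 + X ^ 2 + X + 1` in `𝔽₂[X]`, so that
`y ^ 2 + A y + A g = 0`.

*The ring of integers.* For an integral `r + s y`, the elements `A s` and `A r` are polynomials,
by taking the trace and multiplying by `A`. Since the norm is a polynomial and `A` is squarefree
and coprime to `g`, the denominator `A` cancels (`squarefree_descent`), so that the ring of integers
is `O = 𝔽₂[X] ⊕ 𝔽₂[X] y` (`isModel_ringOfIntegers`).

*Reduction of ideals.* Each nonzero ideal is `d · (a, b + y)` with `a` dividing the norm
`nm b = b ^ 2 - b A + A g` of `b + y` (`IsModel.exists_stdIdeal`, a Hermite normal form). If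
`a a' = nm b`, then `(a, b + y) (a', b + y) = (b + y)` (`IsModel.mul_stdIdeal`), which needs
`a`, `a'` and `A` to be jointly coprime; this holds because neither `X ^ 2` nor `(X + 1) ^ 2`
divides a value of `nm`. Taking `b` reduced modulo `a`, this replaces `a` by a divisor of smaller
degree whenever `deg a ≥ 4`.

*Small ideals.* The primes `X ^ 2 + X + 1`, `X ^ 3 + X + 1` and `X ^ 3 + X ^ 2 + 1` are inert: they
never divide `nm b` (`not_dvd_two`, `not_dvd_three`, `not_dvd_three'`). Hence a divisor of `nm b` of
degree at most `3` divides `A` (`small_divisor`), and the class group consists of `1`, the classes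
`p`, `q` of the ramified primes `(X, y)`, `(X + 1, y)`, and `p q = [(A, y)]`.

*Exact order.* The squares of these ideals are `(X)`, `(X + 1)` and `(A)`, so their classes have
order dividing `2`. If one of the ideals were `(z)`, then comparing norms in `(z) ^ 2 = (a)` gives
`N z = a`. The norm of an element with nonzero `y`-coordinate has degree at least `7`
(`seven_le_natDegree`), so `a` would be a square in `𝔽₂[X]`, although its derivative is `1`
(`IsModel.not_span_sq`). Therefore the class group is a Klein four-group.
-/

namespace ClassGroupTwelve
open scoped nonZeroDivisors

local notation "𝓡" => (ZMod 2)[X]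

/-! ### Norm values and their small divisors -/

/-- The polynomial `A = X (X + 1)`, the coefficient of `y` in the equation of the extension. -/
noncomputable abbrev dA : 𝓡 := X * (X + 1)
/-- The quintic cofactor: the constant term of the equation of `y` is `dA * gg`. -/
noncomputable abbrev gg : 𝓡 := X ^ 5 + X ^ 3 + X ^ 2 + X + 1
/-- The norm of `b + y`. -/
noncomputable abbrev nm (b : 𝓡) : 𝓡 := b ^ 2 - b * dA + dA * gg

lemma two_eq_zero : (2 : 𝓡) = 0 := by
  have := CharP.cast_eq_zero 𝓡 2
  exact_mod_cast this

lemma not_X_sq_dvd_nm (b : 𝓡) : ¬ X ^ 2 ∣ nm b := by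
  intro h
  have h1 : (X : 𝓡) ∣ b := by
    have : (X : 𝓡) ∣ b ^ 2 := by
      have h2 : (X : 𝓡) ∣ nm b := (Dvd.intro_left (X : 𝓡) (by ring)).trans h
      rw [show b ^ 2 = nm b + X * ((X + 1) * (b - gg)) by ring]
      exact dvd_add h2 (dvd_mul_right _ _)
    exact prime_X.dvd_of_dvd_pow this
  obtain ⟨c, rfl⟩ := h1
  obtain ⟨q, hq⟩ := h
  have h3 : (X + 1) * gg = X * (q - c ^ 2 + (X + 1) * c) := by
    apply mul_left_cancel₀ (X_ne_zero (R := ZMod 2))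
    linear_combination hq
  have := congrArg (eval 0) h3
  simp at this

lemma prime_X_add_one : Prime (X + 1 : 𝓡) := by
  have := prime_X_sub_C (-1 : ZMod 2)
  rwa [C_neg, C_1, sub_neg_eq_add] at this

lemma not_X_add_one_sq_dvd_nm (b : 𝓡) : ¬ (X + 1) ^ 2 ∣ nm b := by
  intro h
  have h1 : (X + 1 : 𝓡) ∣ b := by
    have : (X + 1 : 𝓡) ∣ b ^ 2 := by
      have h2 : (X + 1 : 𝓡) ∣ nm b := (Dvd.intro_left (X + 1 : 𝓡) (by ring)).trans h
      rw [show b ^ 2 = nm b + (X + 1) * (X * (b - gg)) by ring]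
      exact dvd_add h2 (dvd_mul_right _ _)
    exact prime_X_add_one.dvd_of_dvd_pow this
  obtain ⟨c, rfl⟩ := h1
  obtain ⟨q, hq⟩ := h
  have h3 : X * gg = (X + 1) * (q - c ^ 2 + X * c) := by
    apply mul_left_cancel₀ prime_X_add_one.ne_zero
    linear_combination hq
  have := congrArg (eval 1) h3
  simp at this
  revert this
  generalize eval 1 q = u
  generalize eval 1 c = v
  revert u v
  decide

/-- Iterated Frobenius commutes with polynomials over `𝔽₂`. -/
lemma aeval_pow_two_pow {S : Type*} [CommRing S] [Algebra (ZMod 2) S] (w : S) (b : 𝓡) (k : ℕ) :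
    aeval w b ^ 2 ^ k = aeval (w ^ 2 ^ k) b := by
  induction k generalizing w with
  | zero => simp
  | succ k ih =>
    rw [pow_succ, pow_mul, ih, ← map_pow, ← ZMod.expand_card, expand_aeval, ← pow_mul]

lemma two_eq_zero' {S : Type*} [CommRing S] [Algebra (ZMod 2) S] : (2 : S) = 0 := by
  have := congrArg (algebraMap (ZMod 2) S) (show (2 : ZMod 2) = 0 from rfl)
  rwa [map_ofNat, map_zero] at this

/-- With `w` a root of `X ^ 2 + X + 1`, the value `β = b(w)` satisfies `β ^ 4 = β`, which is
incompatible with the vanishing of the norm. -/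
lemma inert_two {S : Type*} [CommRing S] [Nontrivial S] [Algebra (ZMod 2) S] (w : S)
    (hw : w ^ 2 + w + 1 = 0) (b : 𝓡) : aeval w (nm b) ≠ 0 := by
  intro h
  have h4 := aeval_pow_two_pow w b 2
  have h2 := two_eq_zero' (S := S)
  have hw4 : w ^ 2 ^ 2 = w := by grind
  rw [hw4] at h4
  simp at h
  generalize aeval w b = β at *
  apply one_ne_zero (α := S)
  grind

/-- As in `inert_two`, for the cubic `X ^ 3 + X + 1`, where `β ^ 8 = β`. -/
lemma inert_three {S : Type*} [CommRing S] [Nontrivial S] [Algebra (ZMod 2) S] (w : S)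
    (hw : w ^ 3 + w + 1 = 0) (b : 𝓡) : aeval w (nm b) ≠ 0 := by
  intro h
  have h4 := aeval_pow_two_pow w b 3
  have h2 := two_eq_zero' (S := S)
  have hw4 : w ^ 2 ^ 3 = w := by grind
  rw [hw4] at h4
  simp at h
  generalize aeval w b = β at *
  apply one_ne_zero (α := S)
  grind

/-- As in `inert_two`, for the cubic `X ^ 3 + X ^ 2 + 1`, where `β ^ 8 = β`. -/
lemma inert_three' {S : Type*} [CommRing S] [Nontrivial S] [Algebra (ZMod 2) S] (w : S)
    (hw : w ^ 3 + w ^ 2 + 1 = 0) (b : 𝓡) : aeval w (nm b) ≠ 0 := by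
  intro h
  have h4 := aeval_pow_two_pow w b 3
  have h2 := two_eq_zero' (S := S)
  have hw4 : w ^ 2 ^ 3 = w := by grind
  rw [hw4] at h4
  simp at h
  generalize aeval w b = β at *
  apply one_ne_zero (α := S)
  grind

/-- Divisibility by `p` is tested by evaluating at the root of `p` in `𝔽₂[X] / (p)`. -/
lemma not_dvd_of_inert {p : 𝓡} (hp : p.degree ≠ 0)
    (h : ∀ (S : Type) [CommRing S] [Nontrivial S] [Algebra (ZMod 2) S] (w : S),
      aeval w p = 0 → ∀ b, aeval w (nm b) ≠ 0) (b : 𝓡) : ¬ p ∣ nm b := by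
  intro hd
  have := AdjoinRoot.nontrivial p hp
  refine h (AdjoinRoot p) (AdjoinRoot.root p) ?_ b ?_
  · rw [AdjoinRoot.aeval_eq, AdjoinRoot.mk_self]
  · rw [AdjoinRoot.aeval_eq, AdjoinRoot.mk_eq_zero]
    exact hd

lemma not_dvd_two (b : 𝓡) : ¬ (X ^ 2 + X + 1 : 𝓡) ∣ nm b := by
  apply not_dvd_of_inert
  · have : (X ^ 2 + X + 1 : 𝓡).degree = 2 := by compute_degree!
    rw [this]; decide
  · intro S _ _ _ w hw
    exact inert_two w (by simpa using hw)

lemma not_dvd_three (b : 𝓡) : ¬ (X ^ 3 + X + 1 : 𝓡) ∣ nm b := by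
  apply not_dvd_of_inert
  · have : (X ^ 3 + X + 1 : 𝓡).degree = 3 := by compute_degree!
    rw [this]; decide
  · intro S _ _ _ w hw
    exact inert_three w (by simpa using hw)

lemma not_dvd_three' (b : 𝓡) : ¬ (X ^ 3 + X ^ 2 + 1 : 𝓡) ∣ nm b := by
  apply not_dvd_of_inert
  · have : (X ^ 3 + X ^ 2 + 1 : 𝓡).degree = 3 := by compute_degree!
    rw [this]; decide
  · intro S _ _ _ w hw
    exact inert_three' w (by simpa using hw)

lemma nm_ne_zero (b : 𝓡) : nm b ≠ 0 := fun h => not_X_sq_dvd_nm b (h ▸ dvd_zero _)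

/-- The remaining polynomials of degree at most `3` have a factor `X ^ 2`, `(X + 1) ^ 2` or an
inert prime. -/
lemma small_divisor {a b : 𝓡} (ha : a ≠ 0) (hd : a.natDegree ≤ 3) (h : a ∣ nm b) :
    a = 1 ∨ a = X ∨ a = X + 1 ∨ a = dA := by
  have hX := fun e : X ^ 2 ∣ a => not_X_sq_dvd_nm b (e.trans h)
  have hX1 := fun e : (X + 1) ^ 2 ∣ a => not_X_add_one_sq_dvd_nm b (e.trans h)
  have h2 := fun e : (X ^ 2 + X + 1) ∣ a => not_dvd_two b (e.trans h)
  have h3 := fun e : (X ^ 3 + X + 1) ∣ a => not_dvd_three b (e.trans h)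
  have h3' := fun e : (X ^ 3 + X ^ 2 + 1) ∣ a => not_dvd_three' b (e.trans h)
  have t := two_eq_zero
  have k : ∀ u : ZMod 2, u = 0 ∨ u = 1 := by decide
  have e := as_sum_range_C_mul_X_pow' (p := a) (n := 4) (by omega)
  simp only [Finset.sum_range_succ, Finset.sum_range_zero] at e
  generalize a.coeff 0 = c0, a.coeff 1 = c1, a.coeff 2 = c2, a.coeff 3 = c3 at e
  rcases k c0 with rfl | rfl <;> rcases k c1 with rfl | rfl <;>
  rcases k c2 with rfl | rfl <;> rcases k c3 with rfl | rfl <;>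
  simp only [map_zero, map_one, zero_mul, one_mul, zero_add, add_zero, pow_zero, pow_one] at e
  · exact (ha e).elim
  · exact (hX ⟨X, by rw [e]; ring⟩).elim
  · exact (hX ⟨1, by rw [e]; ring⟩).elim
  · exact (hX ⟨X + 1, by rw [e]; ring⟩).elim
  · exact Or.inr (Or.inl e)
  · exact (hX1 ⟨X, by rw [e]; linear_combination (-X ^ 2) * t⟩).elim
  · exact Or.inr (Or.inr (Or.inr (by rw [e]; ring)))
  · exact (h2 ⟨X, by rw [e]; ring⟩).elim
  · exact Or.inl e
  · exact (h2 ⟨X + 1, by rw [e]; linear_combination (-X ^ 2 - X) * t⟩).elim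
  · exact (hX1 ⟨1, by rw [e]; linear_combination (-X) * t⟩).elim
  · exact (h3' ⟨1, by rw [e]; ring⟩).elim
  · exact Or.inr (Or.inr (Or.inl (by rw [e]; ring)))
  · exact (h3 ⟨1, by rw [e]; ring⟩).elim
  · exact (h2 ⟨1, by rw [e]; ring⟩).elim
  · exact (hX1 ⟨X + 1, by rw [e]; linear_combination (-X ^ 2 - X) * t⟩).elim

lemma X_dvd_of_dvd_nm {b : 𝓡} (h : X ∣ nm b) : X ∣ b := by
  have : (X : 𝓡) ∣ b ^ 2 := by
    rw [show b ^ 2 = nm b + X * ((X + 1) * (b - gg)) by ring]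
    exact dvd_add h (dvd_mul_right _ _)
  exact prime_X.dvd_of_dvd_pow this

lemma X_add_one_dvd_of_dvd_nm {b : 𝓡} (h : X + 1 ∣ nm b) : X + 1 ∣ b := by
  have : (X + 1 : 𝓡) ∣ b ^ 2 := by
    rw [show b ^ 2 = nm b + (X + 1) * (X * (b - gg)) by ring]
    exact dvd_add h (dvd_mul_right _ _)
  exact prime_X_add_one.dvd_of_dvd_pow this

lemma coprime_X : IsCoprime (X : 𝓡) (X + 1) := ⟨-1, 1, by ring⟩

/-- For such `a` the ideal `(a, b + y)` is `(a, y)`. -/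
lemma dvd_of_small {a b : 𝓡} (ha : a = 1 ∨ a = X ∨ a = X + 1 ∨ a = dA) (h : a ∣ nm b) :
    a ∣ b := by
  rcases ha with rfl | rfl | rfl | rfl
  · exact one_dvd _
  · exact X_dvd_of_dvd_nm h
  · exact X_add_one_dvd_of_dvd_nm h
  · exact coprime_X.mul_dvd (X_dvd_of_dvd_nm ((dvd_mul_right _ _).trans h))
      (X_add_one_dvd_of_dvd_nm ((dvd_mul_left _ _).trans h))

/-- `a`, `a'` and `A` are jointly coprime: a common prime factor would be `X` or `X + 1`, and its
square would divide `nm b`. -/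
lemma primitive {a a' b : 𝓡} (h : a * a' = nm b) : ∃ u v w, u * a + v * a' + w * dA = 1 := by
  have key : ∀ p : 𝓡, Prime p → ¬ p ^ 2 ∣ nm b → IsCoprime (EuclideanDomain.gcd a a') p := by
    intro p hp hn
    refine ((EuclideanDomain.dvd_or_coprime p _ hp.irreducible).resolve_left ?_).symm
    intro hd
    apply hn
    rw [← h, sq]
    exact mul_dvd_mul (hd.trans (EuclideanDomain.gcd_dvd_left _ _))
      (hd.trans (EuclideanDomain.gcd_dvd_right _ _))
  obtain ⟨u, w, e⟩ := (key _ prime_X (not_X_sq_dvd_nm b)).mul_right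
    (key _ prime_X_add_one (not_X_add_one_sq_dvd_nm b))
  refine ⟨u * EuclideanDomain.gcdA a a', u * EuclideanDomain.gcdB a a', w, ?_⟩
  rw [EuclideanDomain.gcd_eq_gcd_ab] at e
  linear_combination e

/-- This makes the cofactor `nm b / a` have smaller degree than `a`. -/
lemma natDegree_nm_lt {a b : 𝓡} (ha : 4 ≤ a.natDegree) (hb : b.natDegree < a.natDegree) :
    (nm b).natDegree < 2 * a.natDegree := by
  have hA : (dA : 𝓡).natDegree ≤ 2 := by unfold dA; compute_degree
  have hAg : (dA * gg : 𝓡).natDegree ≤ 7 := by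
    unfold dA gg; compute_degree
  have h1 : (b ^ 2).natDegree ≤ 2 * b.natDegree := natDegree_pow_le
  have h2 : (b * dA).natDegree ≤ b.natDegree + 2 := natDegree_mul_le.trans (by omega)
  have h3 := natDegree_sub_le (b ^ 2) (b * dA)
  have h4 := natDegree_add_le (b ^ 2 - b * dA) (dA * gg)
  unfold nm
  omega

/-- The norm of `c + d y` has degree at least `7` if `d ≠ 0`: the leading terms of `c ^ 2` and
`d ^ 2 A g` have degrees of different parity, so they cannot cancel. -/
lemma seven_le_natDegree {c d : 𝓡} (hd : d ≠ 0) :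
    7 ≤ (c ^ 2 - c * d * dA + d ^ 2 * (dA * gg)).natDegree := by
  have hA : (dA : 𝓡).natDegree = 2 := by unfold dA; compute_degree!
  have hAg : (dA * gg : 𝓡).natDegree = 7 := by
    unfold dA gg; compute_degree!
  have hAg0 : (dA * gg : 𝓡) ≠ 0 := by intro h; simp [h] at hAg
  have h1 : (c ^ 2).natDegree = 2 * c.natDegree := natDegree_pow _ _
  have h2 : (c * d * dA).natDegree ≤ c.natDegree + d.natDegree + 2 :=
    natDegree_mul_le.trans (by have := natDegree_mul_le (p := c) (q := d); omega)
  have h3 : (d ^ 2 * (dA * gg)).natDegree = 2 * d.natDegree + 7 := by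
    rw [natDegree_mul (pow_ne_zero 2 hd) hAg0, natDegree_pow, hAg]
  have h4 := natDegree_sub_le (c ^ 2) (c * d * dA)
  rcases le_or_gt (d.natDegree + 4) c.natDegree with h | h
  · rw [natDegree_add_eq_left_of_natDegree_lt, natDegree_sub_eq_left_of_natDegree_lt] <;>
    [skip; omega; rw [natDegree_sub_eq_left_of_natDegree_lt]] <;> omega
  · rw [natDegree_add_eq_right_of_natDegree_lt] <;> omega

/-! ### Ideals and their reduction -/

/-- `O` is free over `𝔽₂[X]` with basis `1, y`, and `y ^ 2 + A y + A g = 0`. -/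
structure IsModel {O : Type*} [CommRing O] [Algebra 𝓡 O] (y : O) : Prop where
  rel : y ^ 2 = -(algebraMap 𝓡 O dA * y) - algebraMap 𝓡 O (dA * gg)
  rep : ∀ z : O, ∃ a b : 𝓡, z = algebraMap 𝓡 O a + algebraMap 𝓡 O b * y
  uniq : ∀ a b : 𝓡, algebraMap 𝓡 O a + algebraMap 𝓡 O b * y = 0 → a = 0 ∧ b = 0

section Model

variable {O : Type*} [CommRing O] [Algebra 𝓡 O] {y : O}

local notation "φ" => algebraMap 𝓡 O

/-- The ideal `(a, b + y)`. -/
noncomputable def stdIdeal (y : O) (a b : 𝓡) : Ideal O := Ideal.span {φ a, φ b + y}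

lemma IsModel.inj (h : IsModel y) {a : 𝓡} (ha : φ a = 0) : a = 0 :=
  (h.uniq a 0 (by simp [ha])).1

lemma IsModel.norm_eq (h : IsModel y) (b : 𝓡) :
    φ (nm b) = (φ b + y) * (φ b - φ dA - y) := by
  have := h.rel
  rw [nm, map_add, map_sub, map_pow, map_mul _ b]
  linear_combination this

lemma stdIdeal_congr (y : O) {a b b' : 𝓡} (h : a ∣ b - b') :
    stdIdeal y a b = stdIdeal y a b' := by
  obtain ⟨c, hc⟩ := h
  have e : φ b + y = (φ b' + y) + φ c * φ a := by
    rw [← map_mul, mul_comm c, ← hc, map_sub]; ring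
  rw [stdIdeal, stdIdeal, e, Ideal.span_pair_add_mul_left]

/-- The Hermite normal form of an ideal `J`: here `d` generates the ideal of `y`-coordinates of
elements of `J`, and `d * a` generates the contraction of `J` to `𝔽₂[X]`. -/
lemma IsModel.exists_stdIdeal [IsDomain O] (h : IsModel y) (J : Ideal O) (hJ : J ≠ ⊥) :
    ∃ d a b : 𝓡, d ≠ 0 ∧ a ≠ 0 ∧ a ∣ nm b ∧ J = Ideal.span {φ d} * stdIdeal y a b := by
  -- the ideal of `y`-coordinates of elements of `J`, and the contraction of `J`
  let D : Ideal 𝓡 :=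
    { carrier := {d | ∃ c, φ c + φ d * y ∈ J}
      zero_mem' := ⟨0, by simp⟩
      add_mem' := by
        rintro d d' ⟨c, hc⟩ ⟨c', hc'⟩
        refine ⟨c + c', ?_⟩
        have := J.add_mem hc hc'
        simp only [map_add]
        convert this using 1
        ring
      smul_mem' := by
        rintro r d ⟨c, hc⟩
        refine ⟨r * c, ?_⟩
        have := J.mul_mem_left (φ r) hc
        simp only [smul_eq_mul, map_mul]
        convert this using 1
        ring }
  obtain ⟨d, hd⟩ := IsPrincipalIdealRing.principal D
  obtain ⟨a₀, ha₀⟩ := IsPrincipalIdealRing.principal (J.comap φ)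
  have hD : ∀ {e c : 𝓡}, φ c + φ e * y ∈ J → d ∣ e := by
    intro e c hc
    rw [← Ideal.mem_span_singleton, ← Ideal.submodule_span_eq, ← hd]
    exact (show e ∈ D from ⟨c, hc⟩)
  have hA : ∀ {e : 𝓡}, φ e ∈ J → a₀ ∣ e := by
    intro e he
    rw [← Ideal.mem_span_singleton, ← Ideal.submodule_span_eq, ← ha₀]
    exact (show e ∈ J.comap φ from he)
  obtain ⟨c₀, hc₀⟩ : ∃ c, φ c + φ d * y ∈ J :=
    show d ∈ D from hd ▸ Submodule.mem_span_singleton_self d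
  have ha₀J : φ a₀ ∈ J :=
    show a₀ ∈ J.comap φ from ha₀ ▸ Submodule.mem_span_singleton_self a₀
  have hrel := h.rel
  simp only [map_mul, map_add, map_pow, map_one] at hrel
  have hda : d ∣ a₀ := hD (c := 0) (by simpa using J.mul_mem_right y ha₀J)
  have hdc : d ∣ c₀ := by
    have : d ∣ c₀ - d * dA := by
      refine hD (c := -(d * (dA * gg))) ?_
      convert J.mul_mem_left y hc₀ using 1
      simp only [map_mul, map_add, map_pow, map_one, map_neg, map_sub]
      linear_combination -(φ d) * hrel
    have h2 := dvd_add this (dvd_mul_right d dA)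
    rwa [sub_add_cancel] at h2
  obtain ⟨a, rfl⟩ := hda
  obtain ⟨b, rfl⟩ := hdc
  -- the norm of a nonzero element of `J` is a nonzero element of the contraction
  have ha : d * a ≠ 0 := by
    intro h0
    obtain ⟨z, hz, hz0⟩ := Submodule.exists_mem_ne_zero_of_ne_bot hJ
    obtain ⟨p, q, rfl⟩ := h.rep z
    have h1 : φ (p ^ 2 - p * q * dA + q ^ 2 * (dA * gg)) ∈ J := by
      convert J.mul_mem_left (φ p - φ q * φ dA - φ q * y) hz using 1
      simp only [map_mul, map_add, map_pow, map_one, map_sub]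
      linear_combination (φ q) ^ 2 * hrel
    have h2 := hA h1
    rw [h0, zero_dvd_iff] at h2
    by_cases hq : q = 0
    · subst hq
      simp at h2
      simp [h2] at hz0
    · have := seven_le_natDegree (c := p) hq
      rw [h2] at this
      simp at this
  refine ⟨d, a, b, left_ne_zero_of_mul ha, right_ne_zero_of_mul ha, ?_, ?_⟩
  · have h1 : φ (d * nm b) ∈ J := by
      convert J.mul_mem_right (φ b - φ dA - y) hc₀ using 1
      rw [map_mul, h.norm_eq, map_mul _ d b]
      ring
    exact (mul_dvd_mul_iff_left (left_ne_zero_of_mul ha)).1 (hA h1)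
  · rw [stdIdeal, Ideal.span_mul_span', Set.singleton_mul, Set.image_pair]
    apply le_antisymm
    · intro z hz
      obtain ⟨p, q, rfl⟩ := h.rep z
      obtain ⟨e, rfl⟩ := hD hz
      have h1 : φ (p - e * (d * b)) ∈ J := by
        convert J.sub_mem hz (J.mul_mem_left (φ e) hc₀) using 1
        simp only [map_mul, map_sub]
        ring
      obtain ⟨r, hr⟩ := hA h1
      rw [Ideal.mem_span_pair]
      refine ⟨φ r, φ e, ?_⟩
      have := congrArg φ hr
      simp only [map_mul, map_sub] at this ⊢
      linear_combination -this
    · rw [Ideal.span_le, Set.insert_subset_iff, Set.singleton_subset_iff]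
      constructor
      · simpa using ha₀J
      · rw [SetLike.mem_coe]
        convert hc₀ using 1
        rw [map_mul]; ring

lemma IsModel.two (_ : IsModel y) : (2 : O) = 0 := by
  have := congrArg φ two_eq_zero
  rwa [map_ofNat, map_zero] at this

/-- The product of `(a, b + y)` and `(a', b + y)` is principal, so their classes are inverse to
each other. -/
lemma IsModel.mul_stdIdeal (h : IsModel y) {a a' b : 𝓡} (hn : a * a' = nm b) :
    stdIdeal y a b * stdIdeal y a' b = Ideal.span {φ b + y} := by
  -- the sum of the two generators `(b + y) ^ 2` and `a a' = N (b + y)` is `-A (b + y)` modulo `2`,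
  -- so a Bézout relation between `a`, `a'` and `A` produces `b + y`
  obtain ⟨u, v, w, e⟩ := primitive hn
  have e' := congrArg φ e
  have hn' := congrArg φ hn
  rw [h.norm_eq] at hn'
  have h2 := h.two
  simp only [map_mul, map_add, map_one] at e' hn'
  rw [stdIdeal, stdIdeal, Ideal.span_pair_mul_span_pair]
  apply le_antisymm
  · rw [Ideal.span_le]
    rintro z (rfl | rfl | rfl | rfl) <;> rw [SetLike.mem_coe, Ideal.mem_span_singleton]
    · exact ⟨_, hn'⟩
    · exact dvd_mul_left _ _
    · exact dvd_mul_right _ _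
    · exact dvd_mul_right _ _
  · rw [Ideal.span_singleton_le_iff_mem]
    set I := Ideal.span {φ a * φ a', φ a * (φ b + y), (φ b + y) * φ a',
      (φ b + y) * (φ b + y)} with hI
    have m1 : φ a * φ a' ∈ I := Ideal.subset_span (by simp)
    have m2 : φ a * (φ b + y) ∈ I := Ideal.subset_span (by simp)
    have m3 : (φ b + y) * φ a' ∈ I := Ideal.subset_span (by simp)
    have m4 : (φ b + y) * (φ b + y) ∈ I := Ideal.subset_span (by simp)
    have key := I.add_mem (I.add_mem (I.mul_mem_left (φ u) m2) (I.mul_mem_left (φ v) m3))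
      (I.mul_mem_left (-φ w) (I.add_mem m1 m4))
    convert key using 1
    linear_combination (-(φ b + y)) * e' + φ w * hn' + φ w * (φ b + y) * φ b * h2

lemma stdIdeal_one (y : O) (b : 𝓡) : stdIdeal y 1 b = ⊤ := by
  rw [Ideal.eq_top_iff_one]
  exact Ideal.subset_span (by simp)

lemma IsModel.mul_ramified (h : IsModel y) :
    stdIdeal y X 0 * stdIdeal y (X + 1) 0 = stdIdeal y dA 0 := by
  have hrel := h.rel
  rw [stdIdeal, stdIdeal, Ideal.span_pair_mul_span_pair, stdIdeal]
  simp only [map_mul, map_add, map_pow, map_one, map_zero, zero_add] at hrel ⊢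
  apply le_antisymm
  · rw [Ideal.span_le]
    rintro z (rfl | rfl | rfl | rfl) <;> rw [SetLike.mem_coe, Ideal.mem_span_pair]
    · exact ⟨1, 0, by ring⟩
    · exact ⟨0, φ X, by ring⟩
    · exact ⟨0, φ X + 1, by ring⟩
    · exact ⟨0, y, by ring⟩
  · rw [Ideal.span_le, Set.insert_subset_iff, Set.singleton_subset_iff]
    constructor
    · exact Ideal.subset_span (by simp)
    · set I := Ideal.span {φ X * (φ X + 1), φ X * y, y * (φ X + 1), y * y} with hI
      have m2 : φ X * y ∈ I := Ideal.subset_span (by simp)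
      have m3 : y * (φ X + 1) ∈ I := Ideal.subset_span (by simp)
      rw [SetLike.mem_coe]
      convert I.sub_mem m3 m2 using 1
      ring

/-- A factor `a` of `A` coprime to its cofactor and to `g` ramifies: `(a, y) ^ 2 = (a)`. -/
lemma IsModel.sq_ramified (h : IsModel y) {a a' : 𝓡} (e : a * a' = dA)
    (hc : IsCoprime a (a' * gg)) :
    stdIdeal y a 0 * stdIdeal y a 0 = Ideal.span {φ a} := by
  have hrel := h.rel
  obtain ⟨u, v, e1⟩ := hc
  have e1' := congrArg φ e1
  rw [← e] at hrel
  rw [stdIdeal, Ideal.span_pair_mul_span_pair]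
  simp only [map_mul, map_zero, zero_add, map_add, map_one] at hrel e1' ⊢
  apply le_antisymm
  · rw [Ideal.span_le]
    rintro z (rfl | rfl | rfl | rfl) <;> rw [SetLike.mem_coe, Ideal.mem_span_singleton]
    · exact dvd_mul_right _ _
    · exact dvd_mul_right _ _
    · exact dvd_mul_left _ _
    · rw [← sq, hrel]
      exact dvd_sub (((dvd_mul_right _ _).mul_right _).neg_right)
        ((dvd_mul_right _ _).mul_right _)
  · rw [Ideal.span_singleton_le_iff_mem]
    set I := Ideal.span {φ a * φ a, φ a * y, y * φ a, y * y} with hI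
    have m1 : φ a * φ a ∈ I := Ideal.subset_span (by simp)
    have m2 : φ a * y ∈ I := Ideal.subset_span (by simp)
    have m4 : y * y ∈ I := Ideal.subset_span (by simp)
    have key := I.sub_mem (I.mul_mem_left (φ u) m1)
      (I.mul_mem_left (φ v) (I.add_mem m4 (I.mul_mem_left (φ a') m2)))
    convert key using 1
    linear_combination (-φ a) * e1' + φ v * hrel

lemma IsModel.stdIdeal_mem [IsDomain O] (h : IsModel y) {a : 𝓡} (ha : a ≠ 0) (b : 𝓡) :
    stdIdeal y a b ∈ (Ideal O)⁰ := by
  rw [mem_nonZeroDivisors_iff_ne_zero]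
  intro h0
  have : φ a ∈ stdIdeal y a b := Ideal.subset_span (by simp)
  rw [h0] at this
  exact ha (h.inj (by simpa using this))

/-! ### Nonprincipal ideals -/

lemma isUnit_eq_one {p : 𝓡} (hp : IsUnit p) : p = 1 := by
  obtain ⟨r, hr, rfl⟩ := Polynomial.isUnit_iff.1 hp
  have : ∀ u : ZMod 2, u ≠ 0 → u = 1 := by decide
  rw [this r hr.ne_zero, C_1]

lemma sq_inj {p q : 𝓡} (h : p ^ 2 = q ^ 2) : p = q := by
  have : (p - q) ^ 2 = 0 := by linear_combination h + (q ^ 2 - p * q) * two_eq_zero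
  exact sub_eq_zero.1 (pow_eq_zero_iff two_ne_zero |>.1 this)

/-- The ideal `(a)` is not the square of a principal ideal: `(z) ^ 2 = (a)` forces `N z = a`, hence
`z` has no `y`-coordinate by degree, and `a` is a square, against `a' = 1`. -/
lemma IsModel.not_span_sq [IsDomain O] (h : IsModel y) {a : 𝓡} (ha : a.natDegree ≤ 2)
    (hder : derivative a = 1) (z : O) :
    Ideal.span {z} * Ideal.span {z} ≠ Ideal.span {φ a} := by
  intro e
  have ha0 : a ≠ 0 := by rintro rfl; simp at hder
  rw [Ideal.span_singleton_mul_span_singleton] at e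
  obtain ⟨s, hs⟩ := Ideal.span_singleton_eq_span_singleton.1 e
  obtain ⟨c, d, rfl⟩ := h.rep z
  obtain ⟨t, hst⟩ := s.isUnit.exists_right_inv
  generalize (s : O) = s at hs hst
  obtain ⟨s1, s2, rfl⟩ := h.rep s
  obtain ⟨t1, t2, rfl⟩ := h.rep t
  have hrel := h.rel
  let N : 𝓡 → 𝓡 → 𝓡 := fun c d => c ^ 2 - c * d * dA + d ^ 2 * (dA * gg)
  have hN : ∀ c d, φ (N c d) = (φ c + φ d * y) * (φ c - φ d * φ dA - φ d * y) := by
    intro c d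
    simp only [N, map_mul, map_add, map_pow, map_one, map_sub] at hrel ⊢
    linear_combination ((φ d) ^ 2) * hrel
  have mulN : ∀ c d c' d', N c d * N c' d' =
      N (c * c' - d * d' * (dA * gg)) (c * d' + d * c' - d * d' * dA) := by
    intro c d c' d'
    simp only [N]
    ring
  have prod : ∀ c d c' d', (φ c + φ d * y) * (φ c' + φ d' * y) =
      φ (c * c' - d * d' * (dA * gg)) + φ (c * d' + d * c' - d * d' * dA) * y := by
    intro c d c' d'
    simp only [map_mul, map_add, map_pow, map_one, map_sub] at hrel ⊢
    linear_combination (φ d * φ d') * hrel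
  have ext : ∀ {c d c' d'}, φ c + φ d * y = φ c' + φ d' * y → c = c' ∧ d = d' := by
    intro c d c' d' hh
    have := h.uniq (c - c') (d - d') (by simp only [map_sub]; linear_combination hh)
    exact ⟨sub_eq_zero.1 this.1, sub_eq_zero.1 this.2⟩
  -- `s` and `t` are inverse units of `O`, with `z ^ 2 * s = a`
  have hu : N s1 s2 = 1 := by
    apply isUnit_eq_one
    refine IsUnit.of_mul_eq_one (N t1 t2) ?_
    rw [mulN]
    rw [prod] at hst
    obtain ⟨p, q⟩ := ext (c' := 1) (d' := 0) (hst.trans (by simp))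
    rw [p, q]
    simp [N]
  have hNa : N c d ^ 2 = a ^ 2 := by
    rw [prod, prod] at hs
    obtain ⟨p, q⟩ := ext (c' := a) (d' := 0) (hs.trans (by simp))
    have : N c d * N c d * N s1 s2 = a ^ 2 := by
      rw [mulN, mulN, p, q]
      simp [N]
    rw [← this, hu]; ring
  have hNa := sq_inj hNa
  by_cases hd : d = 0
  · subst hd
    have h1 : a = c ^ 2 := by rw [← hNa]; simp [N]
    rw [h1, derivative_sq] at hder
    have h2 : (C 2 : 𝓡) = 0 := by rw [show (2 : ZMod 2) = 0 from rfl, C_0]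
    simp [h2] at hder
  · have := seven_le_natDegree (c := c) hd
    have h' : (c ^ 2 - c * d * dA + d ^ 2 * (dA * gg)) = a := hNa
    rw [h'] at this
    omega

/-! ### The class group -/

variable [IsDedekindDomain O]

/-- The ideal class of `(a, b + y)`. -/
noncomputable def IsModel.cls (h : IsModel y) {a : 𝓡} (ha : a ≠ 0) (b : 𝓡) : ClassGroup O :=
  ClassGroup.mk0 ⟨stdIdeal y a b, h.stdIdeal_mem ha b⟩

lemma IsModel.cls_congr (h : IsModel y) {a b a' b' : 𝓡} (ha : a ≠ 0) (ha' : a' ≠ 0)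
    (e : stdIdeal y a b = stdIdeal y a' b') : h.cls ha b = h.cls ha' b' := by
  simp only [IsModel.cls, e]

lemma dA_ne_zero : (dA : 𝓡) ≠ 0 := mul_ne_zero X_ne_zero prime_X_add_one.ne_zero

lemma IsModel.exists_cls (h : IsModel y) (c : ClassGroup O) :
    ∃ (a b : 𝓡) (ha : a ≠ 0), a ∣ nm b ∧ c = h.cls ha b := by
  obtain ⟨J, rfl⟩ := ClassGroup.mk0_surjective c
  obtain ⟨d, a, b, hd, ha, hn, e⟩ :=
    h.exists_stdIdeal J.1 (mem_nonZeroDivisors_iff_ne_zero.1 J.2)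
  refine ⟨a, b, ha, hn, ?_⟩
  rw [IsModel.cls, ClassGroup.mk0_eq_mk0_iff]
  refine ⟨1, φ d, one_ne_zero, fun h0 => hd (h.inj h0), ?_⟩
  rw [e, Ideal.span_singleton_one, Ideal.one_eq_top.symm, one_mul]

lemma IsModel.cls_eq_inv (h : IsModel y) {a a' b : 𝓡} (ha : a ≠ 0) (ha' : a' ≠ 0)
    (hn : a * a' = nm b) : h.cls ha b = (h.cls ha' b)⁻¹ := by
  rw [IsModel.cls, IsModel.cls, ClassGroup.mk0_eq_mk0_inv_iff]
  refine ⟨φ b + y, ?_, h.mul_stdIdeal hn⟩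
  intro h0
  simpa using (h.uniq b 1 (by simpa using h0)).2

/-- Reduction, by induction on `deg a`: a subgroup containing the classes of `(a, y)` for `a`
dividing `A` contains the class of every `(a, b + y)` with `a ∣ nm b`. -/
lemma IsModel.cls_small (h : IsModel y) (n : ℕ) : ∀ {a : 𝓡} (b : 𝓡) (ha : a ≠ 0),
    a.natDegree = n → a ∣ nm b → ∀ H : Subgroup (ClassGroup O),
    (∀ {a : 𝓡} (ha : a ≠ 0), (a = 1 ∨ a = X ∨ a = X + 1 ∨ a = dA) → h.cls ha 0 ∈ H) →
    h.cls ha b ∈ H := by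
  induction n using Nat.strong_induction_on with
  | _ n ih =>
    intro a b ha hn hab H hH
    rcases le_or_gt a.natDegree 3 with hd | hd
    · have hs := small_divisor ha hd hab
      rw [h.cls_congr ha ha (stdIdeal_congr y (b' := 0) (by simpa using dvd_of_small hs hab))]
      exact hH ha hs
    · have hdvd : a ∣ b - b % a := ⟨b / a, by
        linear_combination (-1 : 𝓡) * EuclideanDomain.div_add_mod b a⟩
      rw [h.cls_congr ha ha (stdIdeal_congr y hdvd)]
      have hr : (b % a).natDegree < a.natDegree := natDegree_mod_lt b (by omega)
      obtain ⟨a', ha'⟩ : a ∣ nm (b % a) := by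
        have : nm (b % a) = nm b - (b - b % a) * (b + b % a - dA) := by unfold nm; ring
        rw [this]
        exact dvd_sub hab (hdvd.mul_right _)
      have h0 : a' ≠ 0 := by rintro rfl; exact nm_ne_zero _ (by rw [ha', mul_zero])
      have hlt := natDegree_nm_lt (by omega) hr
      rw [ha', natDegree_mul ha h0] at hlt
      rw [h.cls_eq_inv ha h0 ha'.symm]
      exact H.inv_mem (ih a'.natDegree (by omega) _ h0 rfl (ha' ▸ dvd_mul_left _ _) H hH)

lemma IsModel.cls_ne_one (h : IsModel y) {a a' : 𝓡} (ha0 : a ≠ 0) (e : a * a' = dA)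
    (hc : IsCoprime a (a' * gg)) (ha : a.natDegree ≤ 2) (hder : derivative a = 1) :
    h.cls ha0 0 ≠ 1 := by
  intro h1
  rw [IsModel.cls, ClassGroup.mk0_eq_one_iff] at h1
  obtain ⟨z, hz⟩ := h1
  refine h.not_span_sq ha hder z ?_
  rw [← h.sq_ramified e hc, hz]

lemma IsModel.cls_sq (h : IsModel y) {a a' : 𝓡} (ha0 : a ≠ 0) (e : a * a' = dA)
    (hc : IsCoprime a (a' * gg)) : h.cls ha0 0 * h.cls ha0 0 = 1 := by
  rw [mul_eq_one_iff_eq_inv, IsModel.cls, ClassGroup.mk0_eq_mk0_inv_iff]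
  exact ⟨φ a, fun h0 => ha0 (h.inj h0), h.sq_ramified e hc⟩

lemma coprime_one : IsCoprime (X : 𝓡) ((X + 1) * gg) :=
  ⟨-(X ^ 5 + X ^ 4 + X ^ 3 + 2 * X ^ 2 + 2 * X + 2), 1, by ring⟩

lemma coprime_two : IsCoprime (X + 1 : 𝓡) (X * gg) :=
  ⟨X ^ 5 + X ^ 4 + X ^ 2 + 1, 1, by
    linear_combination (X ^ 6 + X ^ 5 + X ^ 4 + X ^ 3 + X ^ 2 + X) * two_eq_zero⟩

lemma coprime_three : IsCoprime dA (1 * gg) := by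
  rw [one_mul]
  exact coprime_one.of_mul_right_right.mul_left coprime_two.of_mul_right_right

/-- The class group of a ring with basis `1, y` is a Klein four-group. -/
theorem IsModel.main (h : IsModel y) :
    Nat.card (ClassGroup O) = 4 ∧ (∀ c : ClassGroup O, c ^ 2 = 1) ∧
      Nonempty (ClassGroup O ≃* Multiplicative (ZMod 2 × ZMod 2)) := by
  have hX0 : (X : 𝓡) ≠ 0 := X_ne_zero
  have hY0 : (X + 1 : 𝓡) ≠ 0 := prime_X_add_one.ne_zero
  have hA0 := dA_ne_zero
  have t := two_eq_zero
  obtain ⟨p, hp⟩ : ∃ p, p = h.cls hX0 0 := ⟨_, rfl⟩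
  obtain ⟨q, hq⟩ : ∃ q, q = h.cls hY0 0 := ⟨_, rfl⟩
  have hpq : p * q = h.cls hA0 0 := by
    rw [hp, hq, IsModel.cls, IsModel.cls, IsModel.cls, ← map_mul]
    congr 1
    exact Subtype.ext h.mul_ramified
  have p2 : p * p = 1 := hp ▸ h.cls_sq hX0 rfl coprime_one
  have q2 : q * q = 1 := hq ▸ h.cls_sq hY0 (mul_comm _ _) coprime_two
  have p1 : p ≠ 1 := hp ▸ h.cls_ne_one hX0 rfl coprime_one (natDegree_X_le.trans one_le_two) (by simp)
  have q1 : q ≠ 1 := hq ▸ h.cls_ne_one hY0 (mul_comm _ _) coprime_two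
    (natDegree_X_add_C (1 : ZMod 2) |>.trans_le one_le_two) (by simp)
  have pq1 : p * q ≠ 1 := hpq ▸ h.cls_ne_one hA0 (mul_one _) coprime_three
    (by unfold dA; compute_degree) (by simp; linear_combination X * t)
  have pq : p ≠ q := by rintro rfl; exact pq1 p2
  have all : ∀ c : ClassGroup O, c = 1 ∨ c = p ∨ c = q ∨ c = p * q := by
    intro c
    let H : Subgroup (ClassGroup O) :=
      { carrier := {c | c = 1 ∨ c = p ∨ c = q ∨ c = p * q}
        one_mem' := Or.inl rfl
        mul_mem' := by
          rintro _ _ (rfl | rfl | rfl | rfl) (rfl | rfl | rfl | rfl) <;>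
            simp only [Set.mem_ofPred_eq] <;> grind
        inv_mem' := by
          rintro _ (rfl | rfl | rfl | rfl) <;> simp only [Set.mem_ofPred_eq]
          · exact Or.inl inv_one
          · exact Or.inr (Or.inl (inv_eq_of_mul_eq_one_left p2))
          · exact Or.inr (Or.inr (Or.inl (inv_eq_of_mul_eq_one_left q2)))
          · exact Or.inr (Or.inr (Or.inr (inv_eq_of_mul_eq_one_left
              (by rw [mul_mul_mul_comm, p2, q2, one_mul])))) }
    obtain ⟨a, b, ha, hn, rfl⟩ := h.exists_cls c
    refine h.cls_small _ b ha rfl hn H ?_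
    rintro a ha (rfl | rfl | rfl | rfl)
    · left
      rw [IsModel.cls, ClassGroup.mk0_eq_one_iff, stdIdeal_one]
      exact top_isPrincipal
    · exact Or.inr (Or.inl hp.symm)
    · exact Or.inr (Or.inr (Or.inl hq.symm))
    · exact Or.inr (Or.inr (Or.inr hpq.symm))
  have card : Nat.card (ClassGroup O) = 4 := by
    classical
    have : (Set.univ : Set (ClassGroup O)) = (({1, p, q, p * q} : Finset _) : Set _) := by
      ext c
      simpa using all c
    rw [← Set.ncard_univ, this, Set.ncard_coe_finset]
    rw [Finset.card_insert_of_notMem, Finset.card_insert_of_notMem,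
      Finset.card_insert_of_notMem, Finset.card_singleton]
    · simpa using p1
    · simpa using ⟨pq, q1⟩
    · simpa using ⟨p1.symm, q1.symm, pq1.symm⟩
  have sq : ∀ c : ClassGroup O, c ^ 2 = 1 := by
    intro c
    rw [pow_two]
    rcases all c with rfl | rfl | rfl | rfl
    · exact mul_one _
    · exact p2
    · exact q2
    · rw [mul_mul_mul_comm, p2, q2, one_mul]
  refine ⟨card, sq, ?_⟩
  have : IsKleinFour (ClassGroup O) := by
    refine ⟨card, Nat.dvd_prime Nat.prime_two |>.1 (Monoid.exponent_dvd_of_forall_pow_eq_one sq)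
      |>.resolve_left ?_⟩
    intro h1
    exact p1 (Monoid.exp_eq_one_iff.1 h1 |>.elim p 1)
  exact IsKleinFour.nonempty_mulEquiv

end Model

/-! ### The ring of integers -/

section Integral

local notation "𝓛" => RatFunc (ZMod 2)

variable {K : Type*} [Field K] [Algebra 𝓛 K] [Algebra 𝓡 K] [IsScalarTower 𝓡 𝓛 K]

/-- If `(d + c y) / A` has polynomial norm `n`, then `A` divides `d` and `c`: this is checked at
the primes `X` and `X + 1`, which divide `A` exactly once and do not divide `g`. -/
lemma squarefree_descent {c d n : 𝓡}
    (h : d ^ 2 - d * dA * c + dA * c ^ 2 * gg = dA ^ 2 * n) : dA ∣ d ∧ dA ∣ c := by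
  have key : ∀ p p' : 𝓡, Prime p → p * p' = dA → IsCoprime p (p' * gg) → p ∣ d ∧ p ∣ c := by
    rintro p p' hp e ⟨u, v, huv⟩
    rw [← e] at h
    have hd : p ∣ d := hp.dvd_of_dvd_pow (n := 2)
      ⟨d * p' * c - p' * c ^ 2 * gg + p * p' ^ 2 * n, by linear_combination h⟩
    refine ⟨hd, ?_⟩
    obtain ⟨d, rfl⟩ := hd
    have h1 : p * d ^ 2 - p * d * p' * c + p' * c ^ 2 * gg = p * p' ^ 2 * n := by
      apply mul_left_cancel₀ hp.ne_zero
      linear_combination h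
    refine hp.dvd_of_dvd_pow (n := 2)
      ⟨u * c ^ 2 + v * (p' ^ 2 * n - d ^ 2 + d * p' * c), ?_⟩
    linear_combination (-c ^ 2) * huv + v * h1
  obtain ⟨h1, h2⟩ := key _ _ prime_X rfl coprime_one
  obtain ⟨h3, h4⟩ := key _ _ prime_X_add_one (mul_comm _ _) coprime_two
  exact ⟨coprime_X.mul_dvd h1 h3, coprime_X.mul_dvd h2 h4⟩

lemma exists_of_isIntegral {r : 𝓛} (h : IsIntegral 𝓡 (algebraMap 𝓛 K r)) :
    ∃ p : 𝓡, algebraMap 𝓡 𝓛 p = r :=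
  IsIntegrallyClosed.isIntegral_iff.1
    ((isIntegral_algebraMap_iff (algebraMap 𝓛 K).injective).1 h)

/-- The integral closure of `𝔽₂[X]` in `K = 𝔽₂(X) ⊕ 𝔽₂(X) y` is `𝔽₂[X] ⊕ 𝔽₂[X] y`. The nontrivial
automorphism `conj` sends `y` to `-A - y`. -/
lemma isModel_ringOfIntegers (y : K)
    (rel : y ^ 2 = -(algebraMap 𝓡 K dA * y) - algebraMap 𝓡 K (dA * gg))
    (rep : ∀ z : K, ∃ r s : 𝓛, z = algebraMap 𝓛 K r + algebraMap 𝓛 K s * y)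
    (uniq : ∀ r s : 𝓛, algebraMap 𝓛 K r + algebraMap 𝓛 K s * y = 0 → r = 0 ∧ s = 0)
    (conj : K →ₐ[𝓛] K) (hconj : conj y = -algebraMap 𝓡 K dA - y) :
    ∃ y' : FunctionField.ringOfIntegers (ZMod 2) K, IsModel y' := by
  have hy : IsIntegral 𝓡 y := by
    refine ⟨X ^ 2 + C dA * X + C (dA * gg), by monicity!, ?_⟩
    simp only [eval₂_add, eval₂_mul, eval₂_pow, eval₂_X, eval₂_C]
    rw [rel]; ring
  have tower : ∀ p : 𝓡, algebraMap 𝓡 K p = algebraMap 𝓛 K (algebraMap 𝓡 𝓛 p) :=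
    fun p => IsScalarTower.algebraMap_apply 𝓡 𝓛 K p
  have inj : Function.Injective (algebraMap 𝓡 𝓛) := IsFractionRing.injective _ _
  have injK : Function.Injective (algebraMap 𝓡 K) := FunctionField.algebraMap_injective _ _
  have two : (2 : K) = 0 := by
    have := congrArg (algebraMap 𝓡 K) two_eq_zero
    rwa [map_ofNat, map_zero] at this
  refine ⟨⟨y, hy⟩, ?_, ?_, ?_⟩
  · exact Subtype.ext rel
  · rintro ⟨z, hz⟩
    have hz : IsIntegral 𝓡 z := hz
    obtain ⟨r, s, rfl⟩ := rep z
    have hz' : IsIntegral 𝓡 (algebraMap 𝓛 K r +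
        algebraMap 𝓛 K s * (-algebraMap 𝓡 K dA - y)) := by
      have := hz.map (conj.restrictScalars 𝓡)
      rwa [AlgHom.coe_restrictScalars', map_add, map_mul, AlgHom.commutes, AlgHom.commutes,
        hconj] at this
    have hA : IsIntegral 𝓡 (algebraMap 𝓡 K dA) := isIntegral_algebraMap
    -- the trace of `r + s y` is `-s A`, as `2 = 0`; its sign is irrelevant for the same reason
    obtain ⟨c, hc⟩ : ∃ c : 𝓡, algebraMap 𝓡 𝓛 c = algebraMap 𝓡 𝓛 dA * s := by
      apply exists_of_isIntegral (K := K)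
      have e : algebraMap 𝓛 K (algebraMap 𝓡 𝓛 dA * s) = (algebraMap 𝓛 K r + algebraMap 𝓛 K s * y)
          + (algebraMap 𝓛 K r + algebraMap 𝓛 K s * (-algebraMap 𝓡 K dA - y)) := by
        rw [map_mul _ _ s, ← tower]
        linear_combination (algebraMap 𝓡 K dA * algebraMap 𝓛 K s - algebraMap 𝓛 K r) * two
      rw [e]
      exact hz.add hz'
    have hcK := congrArg (algebraMap 𝓛 K) hc
    rw [map_mul _ _ s, ← tower, ← tower] at hcK
    obtain ⟨d, hd⟩ : ∃ d : 𝓡, algebraMap 𝓡 𝓛 d = algebraMap 𝓡 𝓛 dA * r := by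
      apply exists_of_isIntegral (K := K)
      have e : algebraMap 𝓛 K (algebraMap 𝓡 𝓛 dA * r) = algebraMap 𝓡 K dA *
          (algebraMap 𝓛 K r + algebraMap 𝓛 K s * y) - algebraMap 𝓡 K c * y := by
        rw [map_mul _ _ r, ← tower, hcK]
        ring
      rw [e]
      exact (hA.mul hz).sub (isIntegral_algebraMap.mul hy)
    -- `n` is the norm of `r + s y`
    obtain ⟨n, hn⟩ : ∃ n : 𝓡, algebraMap 𝓡 𝓛 n = r ^ 2 - r * s * algebraMap 𝓡 𝓛 dA
        + s ^ 2 * algebraMap 𝓡 𝓛 (dA * gg) := by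
      apply exists_of_isIntegral (K := K)
      have e : algebraMap 𝓛 K (r ^ 2 - r * s * algebraMap 𝓡 𝓛 dA
          + s ^ 2 * algebraMap 𝓡 𝓛 (dA * gg)) = (algebraMap 𝓛 K r + algebraMap 𝓛 K s * y)
          * (algebraMap 𝓛 K r + algebraMap 𝓛 K s * (-algebraMap 𝓡 K dA - y)) := by
        rw [map_add, map_sub, map_mul _ (r * s), map_mul _ r, map_pow, map_mul _ (s ^ 2), map_pow,
          ← tower, ← tower]
        linear_combination (algebraMap 𝓛 K s) ^ 2 * rel
      rw [e]
      exact hz.mul hz'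
    obtain ⟨⟨d', rfl⟩, ⟨c', rfl⟩⟩ : dA ∣ d ∧ dA ∣ c := by
      refine squarefree_descent (n := n) (inj ?_)
      simp only [map_sub, map_add, map_mul _ dA, map_mul _ d, map_mul _ (d * dA),
        map_mul _ (dA * c ^ 2), map_mul _ (dA ^ 2), map_pow, hc, hd, hn]
      ring
    have hA0 : algebraMap 𝓡 𝓛 dA ≠ 0 := fun h0 => dA_ne_zero (inj (by rw [h0, map_zero]))
    rw [map_mul _ dA] at hc hd
    obtain rfl := mul_left_cancel₀ hA0 hc
    obtain rfl := mul_left_cancel₀ hA0 hd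
    refine ⟨d', c', Subtype.ext ?_⟩
    show algebraMap 𝓛 K _ + algebraMap 𝓛 K _ * y = algebraMap 𝓡 K d' + algebraMap 𝓡 K c' * y
    rw [tower, tower]
  · intro a b hab
    have := congrArg Subtype.val hab
    have h2 : algebraMap 𝓛 K (algebraMap 𝓡 𝓛 a) + algebraMap 𝓛 K (algebraMap 𝓡 𝓛 b) * y = 0 := by
      rw [← tower, ← tower]
      exact this
    obtain ⟨ha, hb⟩ := uniq _ _ h2
    exact ⟨inj (by rw [ha, map_zero]), inj (by rw [hb, map_zero])⟩

end Integral

end ClassGroupTwelve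

open ClassGroupTwelve

theorem class_group_statement_12
    (f : Polynomial (RatFunc (ZMod 2)))
    (hf : f = X ^ 2 + C (RatFunc.X * (RatFunc.X + 1)) * X + C (RatFunc.X * (RatFunc.X + 1) * (RatFunc.X ^ 5 + RatFunc.X ^ 3 + RatFunc.X ^ 2 + RatFunc.X + 1)))
    [Fact (Irreducible f)] :
    Nat.card (ClassGroup (FunctionField.ringOfIntegers (ZMod 2) (AdjoinRoot f))) = 4 ∧
      (∀ c : ClassGroup (FunctionField.ringOfIntegers (ZMod 2) (AdjoinRoot f)), c ^ 2 = 1) ∧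
      Nonempty (ClassGroup (FunctionField.ringOfIntegers (ZMod 2) (AdjoinRoot f)) ≃* Multiplicative (ZMod 2 × ZMod 2)) := by
  have eA : algebraMap (ZMod 2)[X] (RatFunc (ZMod 2)) dA = RatFunc.X * (RatFunc.X + 1) := by
    simp [RatFunc.algebraMap_X]
  have eAg : algebraMap (ZMod 2)[X] (RatFunc (ZMod 2)) (dA * gg) =
      RatFunc.X * (RatFunc.X + 1) *
        (RatFunc.X ^ 5 + RatFunc.X ^ 3 + RatFunc.X ^ 2 + RatFunc.X + 1) := by
    simp [RatFunc.algebraMap_X]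
  rw [← eAg, ← eA] at hf
  set A := algebraMap (ZMod 2)[X] (RatFunc (ZMod 2)) dA with hA
  set B := algebraMap (ZMod 2)[X] (RatFunc (ZMod 2)) (dA * gg) with hB
  have hA0 : A ≠ 0 := by
    rw [hA, Ne, FaithfulSMul.algebraMap_eq_zero_iff]
    exact dA_ne_zero
  have hmonic : f.Monic := by rw [hf]; monicity!
  have hdeg : f.natDegree = 2 := by rw [hf]; compute_degree!
  have hroot : AdjoinRoot.root f ^ 2 + algebraMap _ _ A * AdjoinRoot.root f
      + algebraMap _ _ B = 0 := by
    have := AdjoinRoot.eval₂_root f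
    conv at this => lhs; arg 3; rw [hf]
    simpa using this
  have hsep : IsSeparable (RatFunc (ZMod 2)) (AdjoinRoot.root f) := by
    have : f.Separable := by
      rw [separable_def]
      have two : (2 : (RatFunc (ZMod 2))[X]) = 0 := by
        have := congrArg (C.comp (algebraMap (ZMod 2)[X] (RatFunc (ZMod 2)))) two_eq_zero
        rwa [map_ofNat, map_zero] at this
      have hder : derivative f = C A := by
        rw [hf]
        simp only [derivative_add, derivative_X_sq, derivative_C_mul, derivative_C, derivative_X]
        rw [C_ofNat]
        linear_combination X * two
      rw [hder]
      exact ⟨0, C A⁻¹, by rw [zero_mul, zero_add, ← C_mul, inv_mul_cancel₀ hA0, C_1]⟩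
    refine this.of_dvd (minpoly.dvd _ _ ?_)
    rw [AdjoinRoot.aeval_eq, AdjoinRoot.mk_self]
  -- finiteness and separability make the ring of integers a Dedekind domain
  have : FunctionField (ZMod 2) (AdjoinRoot f) := hmonic.finite_adjoinRoot
  have : Algebra.IsSeparable (RatFunc (ZMod 2)) (AdjoinRoot f) := by
    rw [← separableClosure.eq_top_iff, eq_top_iff, ← IntermediateField.adjoin_root_eq_top f,
      IntermediateField.adjoin_le_iff, Set.singleton_subset_iff]
    exact hsep
  obtain ⟨y, hy⟩ : ∃ y : FunctionField.ringOfIntegers (ZMod 2) (AdjoinRoot f), IsModel y := by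
    have h2 : (AdjoinRoot.of f) = algebraMap (RatFunc (ZMod 2)) (AdjoinRoot f) := rfl
    refine isModel_ringOfIntegers (AdjoinRoot.root f) ?_ ?_ ?_
      (AdjoinRoot.liftAlgHom f (Algebra.ofId _ _)
        (-algebraMap _ _ A - AdjoinRoot.root f) ?_) ?_
    · rw [IsScalarTower.algebraMap_apply (ZMod 2)[X] (RatFunc (ZMod 2)),
        IsScalarTower.algebraMap_apply (ZMod 2)[X] (RatFunc (ZMod 2)) _ (dA * gg), ← hA, ← hB]
      linear_combination hroot
    · intro z
      obtain ⟨p, rfl⟩ := AdjoinRoot.mk_surjective z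
      have hlt : (p %ₘ f).natDegree < 2 :=
        (natDegree_modByMonic_lt p hmonic (by intro h1; simp [h1] at hdeg)).trans_eq hdeg
      obtain ⟨s, r, e⟩ := exists_eq_X_add_C_of_natDegree_le_one (Nat.lt_succ_iff.1 hlt)
      refine ⟨r, s, ?_⟩
      have := congrArg (AdjoinRoot.mk f) (modByMonic_add_div p f)
      rw [e] at this
      simp only [map_add, map_mul, AdjoinRoot.mk_self, zero_mul, add_zero, AdjoinRoot.mk_C,
        AdjoinRoot.mk_X] at this
      rw [← this, ← h2]
      ring
    · intro r s h
      have h3 : AdjoinRoot.mk f (C s * X + C r) = 0 := by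
        simp only [map_add, map_mul, AdjoinRoot.mk_C, AdjoinRoot.mk_X]
        rw [h2, add_comm, h]
      rw [AdjoinRoot.mk_eq_zero] at h3
      have h4 : C s * X + C r = 0 := by
        by_contra hne
        have := natDegree_le_of_dvd h3 hne
        have h5 : (C s * X + C r).natDegree ≤ 1 := natDegree_linear_le
        omega
      refine ⟨?_, ?_⟩
      · simpa using congrArg (fun p => coeff p 0) h4
      · simpa using congrArg (fun p => coeff p 1) h4
    · conv_lhs => arg 3; rw [hf]
      simp only [eval₂_add, eval₂_mul, eval₂_pow, eval₂_X, eval₂_C]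
      have : ∀ r : RatFunc (ZMod 2), ((Algebra.ofId (RatFunc (ZMod 2)) (AdjoinRoot f)) :
        RatFunc (ZMod 2) →+* AdjoinRoot f) r = algebraMap _ _ r := fun _ => rfl
      rw [this, this]
      linear_combination hroot
    · rw [AdjoinRoot.liftAlgHom_root,
        IsScalarTower.algebraMap_apply (ZMod 2)[X] (RatFunc (ZMod 2))]
  exact hy.main
end
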